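/- Let q be a prime power and let f(x) = Σ_{j=0}^{k} a_j x^{q^j} ∈ F_{q^n}[x] be a monic F_q-linearized polynomial of q-degree k < n which is not a monomial, with a_t = 0 for the index t, and such that either t = 0 and a_0 = 0, or t ≥ 1, a_0 ≠ 0 and one of: (i) t = 1 and k ≥ 3; (ii) t ≥ 2, with k ≥ 3t if t | k and k ≥ 2t−1 if t ∤ k, and either f(x) = a_0 x + a_1 x^q + Σ_{j>t} a_j x^{q^j} with k ≥ t+2, or f(x) = a_0 x + Σ_{j>t} a_j x^{q^j}. Suppose f is r-fat of index t with maximum weight W ≥ 2, and that one of the following holds: q ≥ 4 and max{k,t} < n/4; or q = 3 and max{k,t} ≤ (n−2)/4; or q = 2 and max{k,t} ≤ n/4 − 1. Then r > 1 (in particular, the associated linear set is not a W-club). -/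

import Mathlib

section
set_option linter.unusedSectionVars false
open Finset

namespace FatP

structure Dat (K : Type) [Field K] where
  p : ℕ
  e : ℕ
  q : ℕ
  k : ℕ
  t : ℕ
  hp : p.Prime
  he : 1 ≤ e
  hq : q = p ^ e
  chp : CharP K p
  a : ℕ → K
  ha0 : a 0 ≠ 0
  hak : a k ≠ 0
  hk : 1 ≤ k
  ht : 1 ≤ t
  hkt : k ≠ t
  hmax : 2 ≤ max k t

variable {K : Type} [Field K]

namespace Dat

variable (D : Dat K)

def Q : ℕ := D.q ^ D.t
def F : ℕ := D.q ^ D.k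
def N : ℕ := D.q ^ (max D.k D.t)
def Np : ℕ := D.q ^ (max D.k D.t - 1)

section
variable {R : Type} [CommRing R] [Algebra K R]

def lin (z : R) : R := ∑ j ∈ range (D.k + 1), algebraMap K R (D.a j) * z ^ D.q ^ j
def Th (x y : R) : R := D.lin x * y ^ D.Q - D.lin y * x ^ D.Q

theorem add_pow_p (m : ℕ) (x y : R) : (x + y) ^ D.p ^ m = x ^ D.p ^ m + y ^ D.p ^ m := by
  rcases subsingleton_or_nontrivial R with h | h
  · exact Subsingleton.elim _ _
  · have := D.chp
    have : CharP R D.p := charP_of_injective_algebraMap (algebraMap K R).injective D.p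
    have : Fact D.p.Prime := ⟨D.hp⟩
    exact add_pow_char_pow x y D.p m

theorem q_pow (j : ℕ) : D.q ^ j = D.p ^ (D.e * j) := by
  rw [D.hq, pow_mul]

theorem add_pow_q (j : ℕ) (x y : R) : (x + y) ^ D.q ^ j = x ^ D.q ^ j + y ^ D.q ^ j := by
  rw [q_pow, add_pow_p]

theorem q_two : 2 ≤ D.q := by
  rw [D.hq]
  calc 2 ≤ D.p := D.hp.two_le
    _ = D.p ^ 1 := (pow_one _).symm
    _ ≤ _ := Nat.pow_le_pow_right D.hp.pos D.he

theorem q_pos : 0 < D.q := by have := D.q_two; omega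

theorem qj_pos (j : ℕ) : 0 < D.q ^ j := Nat.pow_pos D.q_pos

theorem neg_pow_q (j : ℕ) (x : R) : (-x) ^ D.q ^ j = -x ^ D.q ^ j := by
  have h := D.add_pow_q j x (-x)
  rw [add_neg_cancel, zero_pow (D.qj_pos j).ne'] at h
  exact (neg_eq_of_add_eq_zero_right h.symm).symm

theorem sub_pow_q (j : ℕ) (x y : R) : (x - y) ^ D.q ^ j = x ^ D.q ^ j - y ^ D.q ^ j := by
  rw [sub_eq_add_neg, add_pow_q, neg_pow_q, sub_eq_add_neg]

theorem lin_add (x y : R) : D.lin (x + y) = D.lin x + D.lin y := by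
  simp only [lin, add_pow_q, mul_add, sum_add_distrib]

theorem lin_sub (x y : R) : D.lin (x - y) = D.lin x - D.lin y := by
  simp only [lin, sub_pow_q, mul_sub, sum_sub_distrib]

theorem lin_zero : D.lin (0 : R) = 0 := by
  simp only [lin]
  exact sum_eq_zero fun j _ => by rw [zero_pow (D.qj_pos j).ne', mul_zero]

theorem pow_q_of_fix {c : R} (hc : c ^ D.q = c) (j : ℕ) : c ^ D.q ^ j = c := by
  induction j with
  | zero => simp
  | succ j ih => rw [pow_succ, pow_mul, ih, hc]

theorem lin_smul {c : R} (hc : c ^ D.q = c) (x : R) : D.lin (c * x) = c * D.lin x := by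
  simp only [lin, mul_pow, mul_sum, D.pow_q_of_fix hc]
  exact sum_congr rfl fun j _ => by ring

theorem Th_fix {c : R} (hc : c ^ D.q = c) (x : R) : D.Th x (c * x) = 0 := by
  rw [Th, D.lin_smul hc, mul_pow, Q, D.pow_q_of_fix hc]; ring

theorem Th_sub (x y z : R) : D.Th x (y - z) = D.Th x y - D.Th x z := by
  rw [Th, Th, Th, lin_sub, Q, sub_pow_q]; ring

theorem Th_add (x y z : R) : D.Th x (y + z) = D.Th x y + D.Th x z := by
  rw [Th, Th, Th, lin_add, Q, add_pow_q]; ring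

theorem lin_map {S : Type} [CommRing S] [Algebra K S] (φ : R →ₐ[K] S) (x : R) :
    φ (D.lin x) = D.lin (φ x) := by
  simp [lin, map_sum]

theorem Th_map {S : Type} [CommRing S] [Algebra K S] (φ : R →ₐ[K] S) (x y : R) :
    φ (D.Th x y) = D.Th (φ x) (φ y) := by
  simp [Th, lin_map]

theorem lin_split (z : R) : D.lin z = algebraMap K R (D.a 0) * z +
    ∑ j ∈ range D.k, algebraMap K R (D.a (j+1)) * z ^ D.q ^ (j+1) := by
  rw [lin, sum_range_succ', add_comm]; simp

end

theorem Q_two : 2 ≤ D.Q := by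
  calc 2 ≤ D.q := D.q_two
    _ = D.q ^ 1 := (pow_one _).symm
    _ ≤ _ := Nat.pow_le_pow_right D.q_pos D.ht

theorem F_two : 2 ≤ D.F := by
  calc 2 ≤ D.q := D.q_two
    _ = D.q ^ 1 := (pow_one _).symm
    _ ≤ _ := Nat.pow_le_pow_right D.q_pos D.hk

theorem Q_le : D.Q ≤ D.N := Nat.pow_le_pow_right D.q_pos (le_max_right _ _)
theorem F_le : D.F ≤ D.N := Nat.pow_le_pow_right D.q_pos (le_max_left _ _)
theorem N_eq : D.N = D.q * D.Np := by
  have := D.hmax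
  rw [N, Np, ← pow_succ', Nat.sub_add_cancel (by omega)]

theorem FQ_cases : (D.F = D.N ∧ D.Q ≤ D.Np) ∨ (D.Q = D.N ∧ D.F ≤ D.Np) := by
  rcases lt_or_gt_of_ne D.hkt with h | h
  · right
    refine ⟨by rw [Q, N, max_eq_right h.le], ?_⟩
    exact Nat.pow_le_pow_right D.q_pos (by rw [max_eq_right h.le]; omega)
  · left
    refine ⟨by rw [F, N, max_eq_left h.le], ?_⟩
    exact Nat.pow_le_pow_right D.q_pos (by rw [max_eq_left h.le]; omega)

theorem Np_le : D.q ≤ D.Np := by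
  calc D.q = D.q ^ 1 := (pow_one _).symm
    _ ≤ _ := Nat.pow_le_pow_right D.q_pos (by have := D.hmax; omega)

end Dat
end FatP
end

section
set_option linter.unusedSectionVars false
open Finset PowerSeries
namespace FatP
variable {K : Type} [Field K]
namespace Dat
variable (D : Dat K) {L : Type} [Field L] [Algebra K L]

/-- the nonlinear part -/
noncomputable def nl (x d : L⟦X⟧) : L⟦X⟧ := D.lin x * d ^ D.Q -
  x ^ D.Q * ∑ j ∈ range D.k, algebraMap K L⟦X⟧ (D.a (j+1)) * d ^ D.q ^ (j+1)

theorem Th_nl (x d : L⟦X⟧) :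
    D.Th x d = D.nl x d - algebraMap K L⟦X⟧ (D.a 0) * x ^ D.Q * d := by
  rw [Th, D.lin_split d, nl]; ring

theorem nl_sub (x d d' : L⟦X⟧) : D.nl x (d - d') = D.nl x d - D.nl x d' := by
  have h := D.Th_sub x d d'
  simp only [Th_nl] at h
  linear_combination h

theorem qj1_two (j : ℕ) : 2 ≤ D.q ^ (j+1) := by
  calc 2 ≤ D.q := D.q_two
    _ = D.q ^ 1 := (pow_one _).symm
    _ ≤ _ := Nat.pow_le_pow_right D.q_pos (by omega)

theorem sq_dvd_nl (x d : L⟦X⟧) : d ^ 2 ∣ D.nl x d := by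
  refine dvd_sub (Dvd.dvd.mul_left (pow_dvd_pow d D.Q_two) _) (Dvd.dvd.mul_left ?_ _)
  exact dvd_sum fun j _ => Dvd.dvd.mul_left (pow_dvd_pow d (D.qj1_two j)) _

theorem arc_unique {x d : L⟦X⟧} (hx : constantCoeff x ≠ 0)
    (hd : constantCoeff d = 0) (h : D.Th x d = 0) : d = 0 := by
  by_contra hne
  obtain ⟨w, hw⟩ := D.sq_dvd_nl x d
  rw [Th_nl, hw] at h
  have h2 : d * (d * w - algebraMap K L⟦X⟧ (D.a 0) * x ^ D.Q) = 0 := by linear_combination h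
  rcases mul_eq_zero.1 h2 with h3 | h3
  · exact hne h3
  · have := congrArg constantCoeff h3
    simp only [map_sub, map_mul, hd, map_pow, zero_mul, map_zero, zero_sub, neg_eq_zero,
      mul_eq_zero] at this
    rcases this with h4 | h4
    · rw [PowerSeries.algebraMap_apply, PowerSeries.constantCoeff_C] at h4
      exact D.ha0 ((_root_.map_eq_zero _).1 h4)
    · exact hx (pow_eq_zero_iff (by have := D.Q_two; omega) |>.1 h4)

theorem arc_exists {x : L⟦X⟧} (hx : constantCoeff x ≠ 0) (y1 : L)
    (h : D.Th (constantCoeff x) y1 = 0) :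
    ∃ y : L⟦X⟧, constantCoeff y = y1 ∧ D.Th x y = 0 := by
  set u : L⟦X⟧ := algebraMap K L⟦X⟧ (D.a 0) * x ^ D.Q with hu
  have hu0 : constantCoeff u ≠ 0 := by
    rw [hu, map_mul, map_pow, PowerSeries.algebraMap_apply, PowerSeries.constantCoeff_C]
    exact mul_ne_zero (by simpa using D.ha0) (pow_ne_zero _ hx)
  have hui : u * u⁻¹ = 1 := PowerSeries.mul_inv_cancel u hu0
  set θ : L⟦X⟧ := D.Th x (C y1) with hθ
  have hθ0 : X ∣ θ := by
    rw [PowerSeries.X_dvd_iff]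
    let φ : L⟦X⟧ →ₐ[K] L := { (constantCoeff : L⟦X⟧ →+* L) with
      commutes' := fun r => by
        simp [PowerSeries.algebraMap_apply] }
    have := D.Th_map φ x (C y1)
    have e1 : φ x = constantCoeff x := rfl
    have e2 : φ (C y1) = y1 := by change constantCoeff (C y1) = y1; simp
    rw [e1, e2, h] at this
    exact this
  let Ψ : L⟦X⟧ → L⟦X⟧ := fun d => u⁻¹ * (θ + D.nl x d)
  have hΨ : ∀ m, 1 ≤ m → ∀ d d', X ^ m ∣ d - d' → X ^ (m+1) ∣ Ψ d - Ψ d' := by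
    intro m hm d d' hdd
    have : Ψ d - Ψ d' = u⁻¹ * D.nl x (d - d') := by
      simp only [Ψ, nl_sub]; ring
    rw [this]
    refine Dvd.dvd.mul_left ?_ _
    refine dvd_trans ?_ (D.sq_dvd_nl x _)
    refine dvd_trans (pow_dvd_pow X (by omega : m + 1 ≤ m * 2)) ?_
    rw [pow_mul]
    exact pow_dvd_pow_of_dvd hdd 2
  let s : ℕ → L⟦X⟧ := fun m => Ψ^[m] 0
  have hs : ∀ m, s (m+1) = Ψ (s m) := fun m => Function.iterate_succ_apply' Ψ m 0
  have hs1 : ∀ m, X ^ (m+1) ∣ s (m+1) - s m := by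
    intro m
    induction m with
    | zero =>
      have : s 1 - s 0 = u⁻¹ * θ := by
        simp only [s, Function.iterate_one, Function.iterate_zero, id, Ψ, sub_zero]
        have : D.nl x (0 : L⟦X⟧) = 0 := by simpa using D.nl_sub x 0 0
        rw [this, add_zero]
      rw [this, zero_add, pow_one]
      exact Dvd.dvd.mul_left hθ0 _
    | succ m ih =>
      rw [hs (m+1), hs m]
      exact hΨ (m+1) (by omega) _ _ (by rw [← hs m]; exact ih)
  have hs2 : ∀ m j, X ^ (m+1) ∣ s (m+j) - s m := by
    intro m j
    induction j with
    | zero => simp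
    | succ j ih =>
      have := dvd_add (dvd_trans (pow_dvd_pow X (by omega)) (hs1 (m+j))) ih
      simpa [add_assoc] using this
  let d : L⟦X⟧ := PowerSeries.mk fun m => coeff m (s m)
  have hd : ∀ m, X ^ (m+1) ∣ d - s m := by
    intro m
    rw [X_pow_dvd_iff]
    intro i hi
    have h1 := X_pow_dvd_iff.1 (hs2 i (m-i)) i (by omega)
    rw [show i + (m-i) = m by omega] at h1
    rw [map_sub] at h1 ⊢
    simp only [d, coeff_mk]
    rw [sub_eq_zero] at h1 ⊢
    exact h1.symm
  have hfix : Ψ d = d := by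
    rw [← sub_eq_zero]
    ext m
    have h1 := hΨ (m+1) (by omega) _ _ (hd m)
    rw [← hs] at h1
    have h2 := hd (m+1)
    have h3 : X ^ (m+1+1) ∣ Ψ d - d := by
      have := dvd_sub h1 h2
      simpa using this
    simpa using X_pow_dvd_iff.1 h3 m (by omega)
  have hd0 : constantCoeff d = 0 := by
    have := hd 0
    have h0 : s 0 = 0 := rfl
    rw [h0, sub_zero, zero_add, pow_one, X_dvd_iff] at this
    exact this
  refine ⟨C y1 + d, by simp [hd0], ?_⟩
  rw [Th_add, ← hθ, Th_nl, ← hu]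
  have : u * Ψ d = θ + D.nl x d := by
    simp only [Ψ]; rw [← mul_assoc, hui, one_mul]
  rw [hfix] at this
  linear_combination -this

end Dat
end FatP
end

section
set_option linter.unusedSectionVars false
open Finset PowerSeries
namespace FatP
section hasse
variable {L : Type} [CommRing L]

noncomputable def hD (i : ℕ) (u : L⟦X⟧) : L⟦X⟧ :=
  PowerSeries.mk fun n => ((n+i).choose i : L) * coeff (n+i) u

theorem coeff_hD (i n : ℕ) (u : L⟦X⟧) :
    coeff n (hD i u) = ((n+i).choose i : L) * coeff (n+i) u := by simp [hD]

theorem hD_zero' (u : L⟦X⟧) : hD 0 u = u := by ext n; simp [coeff_hD]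

theorem hD_add (i : ℕ) (u v : L⟦X⟧) : hD i (u+v) = hD i u + hD i v := by
  ext n; simp [coeff_hD, mul_add]

theorem hD_map0 (i : ℕ) : hD i (0 : L⟦X⟧) = 0 := by
  ext n; simp [coeff_hD]

theorem hD_C (i : ℕ) (hi : i ≠ 0) (c : L) : hD i (C c) = 0 := by
  ext n; simp [coeff_hD, coeff_C, hi]

theorem hD_X1 : hD 1 (X : L⟦X⟧) = 1 := by
  ext n; rw [coeff_hD, coeff_X, coeff_one]
  by_cases h : n = 0 <;> simp [h]

theorem hD_X2 (i : ℕ) (hi : 2 ≤ i) : hD i (X : L⟦X⟧) = 0 := by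
  ext n; rw [coeff_hD, coeff_X, if_neg (by omega)]; simp

theorem coeff_hD_trunc (i n : ℕ) (u : L⟦X⟧) :
    coeff n (hD i u) = (Polynomial.hasseDeriv i (trunc (n+i+1) u)).coeff n := by
  rw [coeff_hD, Polynomial.hasseDeriv_coeff, coeff_trunc, if_pos (by omega)]

theorem coeff_hD_trunc' (i n m : ℕ) (h : n + i < m) (u : L⟦X⟧) :
    coeff n (hD i u) = (Polynomial.hasseDeriv i (trunc m u)).coeff n := by
  rw [coeff_hD, Polynomial.hasseDeriv_coeff, coeff_trunc, if_pos (by omega)]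

theorem hD_mul (i : ℕ) (u v : L⟦X⟧) :
    hD i (u * v) = ∑ ij ∈ antidiagonal i, hD ij.1 u * hD ij.2 v := by
  ext n
  have h1 : coeff n (hD i (u * v)) =
      (Polynomial.hasseDeriv i (trunc (n+i+1) u * trunc (n+i+1) v)).coeff n := by
    rw [coeff_hD, Polynomial.hasseDeriv_coeff,
      coeff_mul_eq_coeff_trunc_mul_trunc u v (Nat.lt_succ_self (n+i)),
      ← Polynomial.coe_mul, Polynomial.coeff_coe]
  rw [h1, Polynomial.hasseDeriv_mul, Polynomial.finsetSum_coeff, map_sum]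
  refine sum_congr rfl fun ij hij => ?_
  rw [Polynomial.coeff_mul, coeff_mul]
  refine sum_congr rfl fun ab hab => ?_
  rw [HasAntidiagonal.mem_antidiagonal] at hij hab
  rw [coeff_hD_trunc' ij.1 ab.1 (n+i+1) (by omega), coeff_hD_trunc' ij.2 ab.2 (n+i+1) (by omega)]

noncomputable def hT : L⟦X⟧ →+* L⟦X⟧⟦X⟧ where
  toFun u := PowerSeries.mk fun i => hD i u
  map_one' := by
    ext i n
    rw [coeff_mk, coeff_hD]
    by_cases hi : i = 0
    · subst hi; simp
    · simp only [coeff_one, hi]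
      rw [if_neg (by omega)]; simp
  map_mul' u v := by
    ext1 i
    rw [coeff_mk, hD_mul, coeff_mul]
    simp
  map_zero' := by ext1 i; simp [hD_map0]
  map_add' u v := by ext1 i; simp [hD_add]

theorem coeff_hT (i : ℕ) (u : L⟦X⟧) : coeff i (hT u) = hD i u := by simp [hT]

theorem hD_sub (i : ℕ) (u v : L⟦X⟧) : hD i (u-v) = hD i u - hD i v := by
  rw [← coeff_hT, map_sub, map_sub, coeff_hT, coeff_hT]

theorem hD_sum {ι : Type} (s : Finset ι) (i : ℕ) (u : ι → L⟦X⟧) :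
    hD i (∑ j ∈ s, u j) = ∑ j ∈ s, hD i (u j) := by
  rw [← coeff_hT, map_sum, map_sum]; simp [coeff_hT]

theorem hD_Cmul (i : ℕ) (c : L) (u : L⟦X⟧) : hD i (C c * u) = C c * hD i u := by
  ext n; simp [coeff_hD]; ring

/-- D^{(j+1)}(Xρ) = X D^{(j+1)}ρ + D^{(j)}ρ -/
theorem hD_Xmul (j : ℕ) (ρ : L⟦X⟧) : hD (j+1) (X * ρ) = X * hD (j+1) ρ + hD j ρ := by
  rw [hD_mul, Finset.Nat.sum_antidiagonal_succ]
  cases j with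
  | zero => simp [hD_zero', hD_X1]
  | succ j =>
    rw [Finset.Nat.sum_antidiagonal_succ, hD_zero']
    simp only [zero_add, hD_X1, one_mul]
    rw [Finset.sum_eq_zero, add_zero]
    intro ij _
    rw [hD_X2 _ (by omega), zero_mul]

end hasse

section frob
variable {R : Type} [CommRing R]

theorem coeff_pow_charpow (p : ℕ) (hp : p.Prime) [CharP R p] (m i : ℕ) (η : R⟦X⟧) :
    coeff i (η ^ p ^ m) = if p ^ m ∣ i then (coeff (i / p ^ m) η) ^ p ^ m else 0 := by
  have : Fact p.Prime := ⟨hp⟩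
  have hpm : p ^ m ≠ 0 := (Nat.pow_pos hp.pos).ne'
  have h : η ^ p ^ m = PowerSeries.map (iterateFrobenius R p m) (expand (p ^ m) hpm η) :=
    (MvPowerSeries.map_iterateFrobenius_expand p hp.ne_zero η m).symm
  rw [h, PowerSeries.coeff_map, coeff_expand]
  split_ifs with h1
  · rw [iterateFrobenius_def]
  · simp
end frob
end FatP
end

section
set_option linter.unusedSectionVars false
open Finset PowerSeries
namespace FatP
variable {K : Type} [Field K]

structure Arc (D : Dat K) where
  L : Type
  [fL : Field L]
  [aL : Algebra K L]
  x1 : L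
  y : L⟦X⟧
  h : D.Th (C x1 + X) y = 0

attribute [instance] Arc.fL Arc.aL

namespace Arc
variable {D : Dat K} (α : Arc D)
noncomputable def x : α.L⟦X⟧ := C α.x1 + X
noncomputable def ev : MvPolynomial (Fin 2) K →ₐ[K] α.L⟦X⟧ := MvPolynomial.aeval ![α.x, α.y]
theorem hx : D.Th α.x α.y = 0 := α.h
theorem ev_X0 : α.ev (MvPolynomial.X 0) = α.x := by simp [ev]
theorem ev_X1 : α.ev (MvPolynomial.X 1) = α.y := by simp [ev]
theorem ev_C (c : K) : α.ev (MvPolynomial.C c) = algebraMap K α.L⟦X⟧ c := by simp [ev]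
end Arc

def Pol (D : Dat K) (d : ℕ) (θ : (α : Arc D) → α.L⟦X⟧) : Prop :=
  ∃ P : MvPolynomial (Fin 2) K, P.totalDegree ≤ d ∧ ∀ α : Arc D, θ α = α.ev P

namespace Pol
variable {D : Dat K} {d d' : ℕ} {θ θ' : (α : Arc D) → α.L⟦X⟧}

theorem mono (h : Pol D d θ) (hd : d ≤ d') : Pol D d' θ := by
  obtain ⟨P, h1, h2⟩ := h
  exact ⟨P, h1.trans hd, h2⟩

theorem congr (h : Pol D d θ) (he : ∀ α, θ' α = θ α) : Pol D d θ' := by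
  obtain ⟨P, h1, h2⟩ := h
  exact ⟨P, h1, fun α => (he α).trans (h2 α)⟩

theorem zero : Pol D d (fun _ => 0) := ⟨0, by simp, fun α => by simp⟩

theorem add (h : Pol D d θ) (h' : Pol D d θ') : Pol D d (fun α => θ α + θ' α) := by
  obtain ⟨P, h1, h2⟩ := h
  obtain ⟨P', h1', h2'⟩ := h'
  exact ⟨P + P', (MvPolynomial.totalDegree_add _ _).trans (max_le h1 h1'), fun α => by
    dsimp only; rw [map_add, h2, h2']⟩

theorem neg (h : Pol D d θ) : Pol D d (fun α => - θ α) := by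
  obtain ⟨P, h1, h2⟩ := h
  exact ⟨-P, by rwa [MvPolynomial.totalDegree_neg], fun α => by dsimp only; rw [map_neg, h2]⟩

theorem sub (h : Pol D d θ) (h' : Pol D d θ') : Pol D d (fun α => θ α - θ' α) :=
  (h.add h'.neg).congr fun _ => sub_eq_add_neg _ _

theorem mul (h : Pol D d θ) (h' : Pol D d' θ') : Pol D (d + d') (fun α => θ α * θ' α) := by
  obtain ⟨P, h1, h2⟩ := h
  obtain ⟨P', h1', h2'⟩ := h'
  exact ⟨P * P', (MvPolynomial.totalDegree_mul _ _).trans (add_le_add h1 h1'), fun α => by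
    dsimp only; rw [map_mul, h2, h2']⟩

theorem pow (h : Pol D d θ) (s : ℕ) : Pol D (s * d) (fun α => θ α ^ s) := by
  obtain ⟨P, h1, h2⟩ := h
  exact ⟨P ^ s, (MvPolynomial.totalDegree_pow _ _).trans (Nat.mul_le_mul_left _ h1), fun α => by
    dsimp only; rw [map_pow, h2]⟩

theorem const (c : K) : Pol D d (fun α => algebraMap K α.L⟦X⟧ c) :=
  ⟨MvPolynomial.C c, by simp, fun α => (α.ev_C c).symm⟩

theorem cmul (c : K) (h : Pol D d θ) : Pol D d (fun α => algebraMap K α.L⟦X⟧ c * θ α) :=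
  ((const (d := 0) c).mul h).mono (by omega)

theorem xx : Pol D 1 (fun α => α.x) :=
  ⟨MvPolynomial.X 0, by simp, fun α => α.ev_X0.symm⟩
theorem yy : Pol D 1 (fun α => α.y) :=
  ⟨MvPolynomial.X 1, by simp, fun α => α.ev_X1.symm⟩

theorem xpow (s : ℕ) : Pol D s (fun α => α.x ^ s) := (xx.pow s).mono (by omega)
theorem ypow (s : ℕ) : Pol D s (fun α => α.y ^ s) := (yy.pow s).mono (by omega)

theorem sum {ι : Type} (s : Finset ι) {φ : ι → (α : Arc D) → α.L⟦X⟧}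
    (h : ∀ i ∈ s, Pol D d (φ i)) : Pol D d (fun α => ∑ i ∈ s, φ i α) := by
  classical
  induction s using Finset.induction_on with
  | empty => exact zero.congr fun α => by simp
  | insert i s hi ih =>
    refine ((h i (by simp)).add (ih fun j hj => h j (by simp [hj]))).congr fun α => ?_
    rw [sum_insert hi]

theorem lin (h : Pol D 1 θ) : Pol D D.F (fun α => D.lin (θ α)) := by
  refine Pol.sum _ fun j hj => ?_
  refine cmul _ ((h.pow _).mono ?_)
  rw [mul_one]
  exact Nat.pow_le_pow_right D.q_pos (by simp at hj; omega)

end Pol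

noncomputable def hTa {L : Type} [Field L] [Algebra K L] : L⟦X⟧ →ₐ[K] L⟦X⟧⟦X⟧ :=
  { (hT : L⟦X⟧ →+* L⟦X⟧⟦X⟧) with
    commutes' := fun r => by
      change hT _ = _
      ext1 i
      rw [coeff_hT, PowerSeries.algebraMap_apply, PowerSeries.algebraMap_apply, coeff_C]
      split_ifs with h
      · subst h; rw [hD_zero', PowerSeries.algebraMap_apply]
      · rw [hD_C _ h] }

noncomputable def Ca {R : Type} [CommRing R] [Algebra K R] : R →ₐ[K] R⟦X⟧ :=
  { (C : R →+* R⟦X⟧) with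
    commutes' := fun r => by
      change C _ = _
      rw [PowerSeries.algebraMap_apply] }

theorem Ca_apply {R : Type} [CommRing R] [Algebra K R] (r : R) : (Ca (K := K) r) = C r := rfl

namespace Arc
variable {D : Dat K} (α : Arc D)

noncomputable def eta : α.L⟦X⟧⟦X⟧ := hT α.y - C α.y

theorem hT_x : hT α.x = C α.x + X := by
  ext1 i
  rw [coeff_hT, x, hD_add, map_add, coeff_C, coeff_X]
  rcases i with _ | _ | i
  · simp [hD_zero']
  · rw [hD_C _ (by omega), hD_X1]; simp
  · rw [hD_C _ (by omega), hD_X2 _ (by omega)]; simp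

theorem eta_eq : D.lin α.eta * C (α.x ^ D.Q) =
    D.lin (X : α.L⟦X⟧⟦X⟧) * C (α.y ^ D.Q) + C (D.lin α.x) * α.eta ^ D.Q
    + D.lin (X : α.L⟦X⟧⟦X⟧) * α.eta ^ D.Q - C (D.lin α.y) * X ^ D.Q - D.lin α.eta * X ^ D.Q := by
  have h1 : D.Th (C α.x + X) (C α.y + α.eta) = 0 := by
    have := D.Th_map (hTa (K := K) (L := α.L)) α.x α.y
    rw [α.hx, map_zero] at this
    have e1 : hTa (K := K) α.x = C α.x + X := α.hT_x
    have e2 : hTa (K := K) α.y = C α.y + α.eta := by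
      rw [eta]; change hT α.y = _; ring
    rw [e1, e2] at this
    exact this.symm
  have h2 : D.Th (C α.x) (C α.y) = 0 := by
    have := D.Th_map (Ca (K := K) (R := α.L⟦X⟧)) α.x α.y
    rw [α.hx, map_zero] at this
    exact this.symm
  have h3 : D.lin (C α.x) = C (D.lin α.x) := by
    rw [← Ca_apply (K := K), ← D.lin_map, Ca_apply]
  have h4 : D.lin (C α.y) = C (D.lin α.y) := by
    rw [← Ca_apply (K := K), ← D.lin_map, Ca_apply]
  simp only [Dat.Th, Dat.lin_add, h3, h4] at h1 h2
  rw [Dat.Q, D.add_pow_q, D.add_pow_q, ← Dat.Q] at h1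
  simp only [map_pow]
  linear_combination h2 - h1

theorem coeff_eta (i : ℕ) (hi : i ≠ 0) : coeff i α.eta = hD i α.y := by
  rw [eta, map_sub, coeff_hT, coeff_C, if_neg hi, sub_zero]

theorem coeff_eta0 : coeff 0 α.eta = 0 := by
  rw [eta, map_sub, coeff_hT, hD_zero', coeff_C, if_pos rfl, sub_self]

theorem coeff_eta_pow (j i : ℕ) : coeff i (α.eta ^ D.q ^ j) =
    if D.q ^ j ∣ i then (coeff (i / D.q ^ j) α.eta) ^ D.q ^ j else 0 := by
  have := D.chp
  have : CharP α.L⟦X⟧ D.p :=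
    charP_of_injective_algebraMap (algebraMap K α.L⟦X⟧).injective D.p
  rw [D.q_pow]
  exact coeff_pow_charpow D.p D.hp _ _ _

theorem eta_coeff (i : ℕ) : algebraMap K α.L⟦X⟧ (D.a 0) * (α.x ^ D.Q * coeff i α.eta) =
    (∑ j ∈ range (D.k+1), if i = D.q ^ j then algebraMap K α.L⟦X⟧ (D.a j) * α.y ^ D.Q else 0)
    + D.lin α.x * coeff i (α.eta ^ D.Q)
    + (∑ j ∈ range (D.k+1), if D.q ^ j ≤ i then
        algebraMap K α.L⟦X⟧ (D.a j) * coeff (i - D.q ^ j) (α.eta ^ D.Q) else 0)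
    - (if i = D.Q then D.lin α.y else 0)
    - (∑ j ∈ range (D.k+1), if D.Q ≤ i then
        algebraMap K α.L⟦X⟧ (D.a j) * coeff (i - D.Q) (α.eta ^ D.q ^ j) else 0)
    - (∑ j ∈ range D.k, 
        algebraMap K α.L⟦X⟧ (D.a (j+1)) * (α.x ^ D.Q * coeff i (α.eta ^ D.q ^ (j+1)))) := by
  have h := congrArg (coeff i) α.eta_eq
  have h1 : coeff i (D.lin α.eta * C (α.x ^ D.Q)) = 
     algebraMap K α.L⟦X⟧ (D.a 0) * (α.x ^ D.Q * coeff i α.eta) + (∑ j ∈ range D.k, 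
        algebraMap K α.L⟦X⟧ (D.a (j+1)) * (α.x ^ D.Q * coeff i (α.eta ^ D.q ^ (j+1)))) := by
    rw [D.lin_split, coeff_mul_C, map_add, PowerSeries.algebraMap_apply, coeff_C_mul, map_sum, add_mul, sum_mul]
    congr 1
    · ring
    · refine sum_congr rfl fun j _ => ?_
      rw [PowerSeries.algebraMap_apply, coeff_C_mul]; ring
  have h2 : coeff i (D.lin (X : α.L⟦X⟧⟦X⟧) * C (α.y ^ D.Q)) = 
    (∑ j ∈ range (D.k+1), if i = D.q ^ j then algebraMap K α.L⟦X⟧ (D.a j) * α.y ^ D.Q else 0) := by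
    rw [Dat.lin, coeff_mul_C, map_sum, sum_mul]
    refine sum_congr rfl fun j _ => ?_
    rw [PowerSeries.algebraMap_apply, coeff_C_mul, coeff_X_pow]
    split_ifs <;> simp
  have h3 : coeff i (D.lin (X : α.L⟦X⟧⟦X⟧) * α.eta ^ D.Q) = 
    (∑ j ∈ range (D.k+1), if D.q ^ j ≤ i then
        algebraMap K α.L⟦X⟧ (D.a j) * coeff (i - D.q ^ j) (α.eta ^ D.Q) else 0) := by
    rw [Dat.lin, sum_mul, map_sum]
    refine sum_congr rfl fun j _ => ?_
    rw [PowerSeries.algebraMap_apply, mul_assoc, coeff_C_mul, coeff_X_pow_mul']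
    split_ifs <;> simp
  have h4 : coeff i (C (D.lin α.y) * X ^ D.Q) = if i = D.Q then D.lin α.y else 0 := by
    rw [coeff_C_mul, coeff_X_pow]; split_ifs <;> simp
  have h5 : coeff i (D.lin α.eta * X ^ D.Q) = (∑ j ∈ range (D.k+1), if D.Q ≤ i then
        algebraMap K α.L⟦X⟧ (D.a j) * coeff (i - D.Q) (α.eta ^ D.q ^ j) else 0) := by
    rw [coeff_mul_X_pow']
    split_ifs
    · rw [Dat.lin, map_sum]
      refine sum_congr rfl fun j _ => ?_
      rw [PowerSeries.algebraMap_apply, coeff_C_mul]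
    · simp
  rw [map_sub, map_sub, map_add, map_add, h1, h2, h3, h4, h5, coeff_C_mul] at h
  linear_combination h

end Arc
end FatP
end

section
set_option linter.unusedSectionVars false
open Finset PowerSeries
namespace FatP
variable {K : Type} [Field K] {D : Dat K}

/-- inductive claim -/
def Gcl (D : Dat K) (i : ℕ) : Prop :=
  Pol D ((D.N+2)*i + D.Q) (fun α => α.x ^ ((D.Q+2)*i+D.Q) * coeff (i+1) α.eta)

theorem Pol.of_xpow {r r' d d' : ℕ} {θ : (α : Arc D) → α.L⟦X⟧} (h : Pol D d (fun α => α.x ^ r * θ α))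
    (hr : r ≤ r') (hd : d + r' ≤ d' + r) : Pol D d' (fun α => α.x ^ r' * θ α) := by
  refine (((Pol.xpow (D := D) (r' - r)).mul h).mono (by omega)).congr fun α => ?_
  rw [← mul_assoc, ← pow_add, Nat.sub_add_cancel hr]

theorem Gpow (m j r d e : ℕ) {φ : (α : Arc D) → α.L⟦X⟧} (hφ : Pol D e φ)
    (hG : ∀ i, D.q ^ j * (i + 1) ≤ m → Gcl D i)
    (hc : D.q ^ j ≤ m → (D.Q+2)*m ≤ r + 2 * D.q ^ j ∧
      D.N * m + r + D.Q * D.q ^ j + e ≤ d + D.N * D.q ^ j + D.Q * m) :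
    Pol D d (fun α => α.x ^ r * (φ α * coeff m (α.eta ^ D.q ^ j))) := by
  set s := D.q ^ j with hs
  have hs0 : 0 < s := D.qj_pos j
  by_cases hdv : s ∣ m
  swap
  · refine Pol.zero.congr fun α => ?_
    rw [Arc.coeff_eta_pow, if_neg hdv]; simp
  obtain ⟨i', rfl⟩ := hdv
  rcases i' with _ | i
  · refine Pol.zero.congr fun α => ?_
    rw [Arc.coeff_eta_pow, if_pos (by simp)]
    simp only [mul_zero, Nat.zero_div, Arc.coeff_eta0]
    rw [zero_pow hs0.ne']; simp
  have hg := (hG i le_rfl)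
  obtain ⟨c1, c2⟩ := hc (Nat.le_mul_of_pos_right _ (by omega))
  have h1 := (hg.pow s).mul hφ
  have h2 : Pol D (s * ((D.N+2)*i + D.Q) + e) (fun α => α.x ^ (s * ((D.Q+2)*i+D.Q)) *
     (φ α * coeff (s * (i+1)) (α.eta ^ D.q ^ j))) := by
    refine h1.congr fun α => ?_
    rw [Arc.coeff_eta_pow, if_pos (Dvd.intro _ rfl), Nat.mul_div_cancel_left _ hs0, mul_pow, ← pow_mul,
      mul_comm s]
    ring
  refine h2.of_xpow ?_ ?_
  · zify at *; nlinarith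
  · zify at *; nlinarith

theorem num1 (F N Q h : ℕ) (h1 : h + 1 = Q) (key : F + N + Q * Q ≤ 2 * Q + N * Q) :
    (Q + 2) * h + F ≤ (N + 2) * h + Q := by
  subst h1; nlinarith

set_option maxHeartbeats 2000000 in
theorem Gall (i : ℕ) : Gcl D i := by
  induction i using Nat.strong_induction_on with
  | _ h ih =>
  have hQ2 := D.Q_two
  have hQN := D.Q_le
  have hFN := D.F_le
  have hcas := D.FQ_cases
  suffices H : Pol D ((D.N+2)*h + D.Q) (fun α => α.x ^ ((D.Q+2)*h) *
      (algebraMap K α.L⟦X⟧ (D.a 0) * (α.x ^ D.Q * coeff (h+1) α.eta))) by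
    refine (H.cmul (D.a 0)⁻¹).congr fun α => ?_
    have : algebraMap K α.L⟦X⟧ (D.a 0)⁻¹ * algebraMap K α.L⟦X⟧ (D.a 0) = 1 := by
      rw [← map_mul, inv_mul_cancel₀ D.ha0, map_one]
    rw [pow_add]
    linear_combination -(α.x ^ ((D.Q+2)*h) * α.x ^ D.Q * coeff (h+1) α.eta) * this
  have key : D.F + D.N + D.Q * D.Q ≤ 2 * D.Q + D.N * D.Q := by
    zify at *
    rcases hcas with ⟨h1, _⟩ | ⟨h1, _⟩ <;> nlinarith
  have hlin : ∀ α : Arc D, α.x ^ ((D.Q+2)*h) * (algebraMap K α.L⟦X⟧ (D.a 0) * (α.x ^ D.Q * coeff (h+1) α.eta))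
    = (∑ j ∈ range (D.k+1), if h+1 = D.q ^ j then algebraMap K α.L⟦X⟧ (D.a j) * (α.x ^ ((D.Q+2)*h) * α.y ^ D.Q) else 0)
    + α.x ^ ((D.Q+2)*h) * (D.lin α.x * coeff (h+1) (α.eta ^ D.Q))
    + (∑ j ∈ range (D.k+1), if D.q ^ j ≤ h+1 then
        α.x ^ ((D.Q+2)*h) * (algebraMap K α.L⟦X⟧ (D.a j) * coeff (h+1 - D.q ^ j) (α.eta ^ D.Q)) else 0)
    - (if h+1 = D.Q then α.x ^ ((D.Q+2)*h) * D.lin α.y else 0)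
    - (∑ j ∈ range (D.k+1), if D.Q ≤ h+1 then
        α.x ^ ((D.Q+2)*h) * (algebraMap K α.L⟦X⟧ (D.a j) * coeff (h+1 - D.Q) (α.eta ^ D.q ^ j)) else 0)
    - (∑ j ∈ range D.k, 
        α.x ^ ((D.Q+2)*h+D.Q) * (algebraMap K α.L⟦X⟧ (D.a (j+1)) * coeff (h+1) (α.eta ^ D.q ^ (j+1)))) := by
    intro α
    rw [α.eta_coeff (h+1)]
    simp only [mul_add, mul_sub, mul_sum, mul_ite, mul_zero, pow_add]
    congr 1
    · congr 1
      congr 1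
      congr 1
      congr 1
      exact sum_congr rfl fun j _ => by split_ifs <;> ring
    · exact sum_congr rfl fun j _ => by ring
  refine Pol.congr ?_ hlin
  refine ((((Pol.add ?_ ?_).add ?_).sub ?_).sub ?_).sub ?_
  · refine Pol.sum _ fun j _ => ?_
    by_cases hj : h + 1 = D.q ^ j
    · simp only [hj, if_true]
      refine Pol.cmul _ (((Pol.xpow _).mul (Pol.ypow _)).mono ?_)
      nlinarith
    · simp only [hj, if_false]; exact Pol.zero
  · refine Gpow (h+1) D.t _ _ D.F (Pol.xx.lin) ?_ ?_
    · intro i hi; exact ih i (by change D.Q * (i+1) ≤ h+1 at hi; nlinarith)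
    · change D.Q ≤ _ → _ ∧ D.N * (h+1) + (D.Q+2)*h + D.Q * D.Q + D.F ≤ ((D.N+2)*h + D.Q) + D.N * D.Q + D.Q * (h+1)
      intro _
      refine ⟨?_, ?_⟩
      · change _ ≤ _ + 2 * D.Q
        nlinarith
      · nlinarith
  · refine Pol.sum _ fun j _ => ?_
    by_cases hj : D.q ^ j ≤ h + 1
    · simp only [hj, if_true]
      obtain ⟨m, hm⟩ := Nat.exists_eq_add_of_le hj
      rw [hm]
      simp only [Nat.add_sub_cancel_left]
      have hqj := D.qj_pos j
      refine Gpow m D.t _ _ 0 (Pol.const _) ?_ ?_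
      · intro i hi; exact ih i (by change D.Q * (i+1) ≤ m at hi; nlinarith)
      · change D.Q ≤ m → _ ≤ _ + 2 * D.Q ∧ D.N * m + (D.Q+2)*h + D.Q * D.Q + 0 ≤ ((D.N+2)*h + D.Q) + D.N * D.Q + D.Q * m
        intro hQm
        refine ⟨?_, ?_⟩
        · nlinarith
        · have hmh : m ≤ h := by omega
          obtain ⟨z, rfl⟩ := Nat.exists_eq_add_of_le hmh
          obtain ⟨w, hw⟩ := Nat.exists_eq_add_of_le hQN
          rw [hw]
          nlinarith
    · simp only [hj, if_false]; exact Pol.zero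
  · by_cases hj : h + 1 = D.Q
    · simp only [hj, if_true]
      refine ((Pol.xpow _).mul (Pol.yy.lin)).mono ?_
      exact num1 _ _ _ _ hj key
    · simp only [hj, if_false]; exact Pol.zero
  · refine Pol.sum _ fun j _ => ?_
    by_cases hj : D.Q ≤ h + 1
    · simp only [hj, if_true]
      obtain ⟨m, hm⟩ := Nat.exists_eq_add_of_le hj
      rw [hm]
      simp only [Nat.add_sub_cancel_left]
      have hqj := D.qj_pos j
      refine Gpow m j _ _ 0 (Pol.const _) ?_ ?_
      · intro i hi; exact ih i (by nlinarith)
      · intro hQm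
        refine ⟨?_, ?_⟩
        · nlinarith
        · have hmh : m ≤ h := by omega
          obtain ⟨z, rfl⟩ := Nat.exists_eq_add_of_le hmh
          obtain ⟨w, hw⟩ := Nat.exists_eq_add_of_le hQN
          rw [hw]
          nlinarith
    · simp only [hj, if_false]; exact Pol.zero
  · refine Pol.sum _ fun j _ => ?_
    have hqj := D.qj1_two j
    refine Gpow (h+1) (j+1) _ _ 0 (Pol.const _) ?_ ?_
    · intro i hi; exact ih i (by nlinarith)
    · intro hQm
      refine ⟨?_, ?_⟩
      · nlinarith
      · obtain ⟨w, hw⟩ := Nat.exists_eq_add_of_le hQN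
        rw [hw]
        nlinarith

/-- hyperderivative lemma -/
def Hy (D : Dat K) (d : ℕ) (θ : (α : Arc D) → α.L⟦X⟧) : Prop :=
  ∀ i, Pol D (d + i * (D.N+2)) (fun α => α.x ^ ((D.Q+2)*i) * hD i (θ α))

namespace Hy
variable {d d' : ℕ} {θ θ' : (α : Arc D) → α.L⟦X⟧}

theorem mul (h : Hy D d θ) (h' : Hy D d' θ') : Hy D (d + d') (fun α => θ α * θ' α) := by
  intro i
  refine Pol.congr (θ := fun α => ∑ ij ∈ antidiagonal i,
    (α.x ^ ((D.Q+2)*ij.1) * hD ij.1 (θ α)) * (α.x ^ ((D.Q+2)*ij.2) * hD ij.2 (θ' α))) ?_ ?_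
  · refine Pol.sum _ fun ij hij => ((h ij.1).mul (h' ij.2)).mono ?_
    rw [HasAntidiagonal.mem_antidiagonal] at hij
    rw [← hij]; apply le_of_eq; ring
  · intro α
    rw [hD_mul, mul_sum]
    refine sum_congr rfl fun ij hij => ?_
    rw [HasAntidiagonal.mem_antidiagonal] at hij
    rw [← hij, mul_add, pow_add]; ring

theorem add (h : Hy D d θ) (h' : Hy D d θ') : Hy D d (fun α => θ α + θ' α) := by
  intro i
  refine ((h i).add (h' i)).congr fun α => ?_
  rw [hD_add, mul_add]

theorem mono (h : Hy D d θ) (hd : d ≤ d') : Hy D d' θ := fun i => (h i).mono (by omega)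

theorem const (c : K) : Hy D d (fun α => algebraMap K α.L⟦X⟧ c) := by
  intro i
  rcases Nat.eq_zero_or_pos i with rfl | hi
  · exact (Pol.const c).congr fun α => by rw [hD_zero']; simp
  · refine Pol.zero.congr fun α => ?_
    dsimp only; rw [PowerSeries.algebraMap_apply, hD_C _ hi.ne', mul_zero]

theorem xx : Hy D 1 (fun α => α.x) := by
  intro i
  have := D.Q_le
  rcases i with _ | _ | i
  · exact (Pol.xx.mono (by omega)).congr fun α => by rw [hD_zero']; simp
  · refine ((Pol.xpow (D.Q+2)).mono (by omega)).congr fun α => ?_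
    dsimp only; rw [Arc.x, hD_add, hD_C _ (by omega), zero_add, hD_X1]; simp
  · refine Pol.zero.congr fun α => ?_
    dsimp only; rw [Arc.x, hD_add, hD_C _ (by omega), hD_X2 _ (by omega)]; simp

theorem yy : Hy D 1 (fun α => α.y) := by
  intro i
  have := D.Q_le
  rcases i with _ | i
  · exact (Pol.yy.mono (by omega)).congr fun α => by rw [hD_zero']; simp
  · have := Gall (D := D) i
    have h2 := Pol.of_xpow (r' := (D.Q+2)*(i+1)) (d' := 1 + (i+1)*(D.N+2)) this (by nlinarith) (by nlinarith)
    refine h2.congr fun α => ?_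
    rw [Arc.coeff_eta _ _ (by omega)]

theorem poly (P : MvPolynomial (Fin 2) K) : Hy D P.totalDegree (fun α => α.ev P) := by
  have hmon : ∀ m : Fin 2 →₀ ℕ, Hy D (m 0 + m 1) (fun α => α.x ^ m 0 * α.y ^ m 1) := by
    intro m
    have hx : ∀ n, Hy D n (fun α => α.x ^ n) := by
      intro n
      induction n with
      | zero => simpa using const (D := D) (d := 0) 1
      | succ n ih => simpa only [pow_succ] using ih.mul xx
    have hy : ∀ n, Hy D n (fun α => α.y ^ n) := by
      intro n
      induction n with
      | zero => simpa using const (D := D) (d := 0) 1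
      | succ n ih => simpa only [pow_succ] using ih.mul yy
    exact (hx _).mul (hy _)
  have hsum : ∀ s : Finset (Fin 2 →₀ ℕ), s ⊆ P.support → Hy D P.totalDegree
      (fun α => ∑ m ∈ s, algebraMap K α.L⟦X⟧ (P.coeff m) * (α.x ^ m 0 * α.y ^ m 1)) := by
    intro s
    classical
    induction s using Finset.induction_on with
    | empty => intro _; simpa using const (D := D) (d := P.totalDegree) 0
    | insert m s hm ih =>
      intro hs
      simp only [sum_insert hm]
      refine Hy.add ?_ (ih fun z hz => hs (by simp [hz]))
      refine ((const (d := 0) _).mul (hmon m)).mono ?_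
      have := MvPolynomial.le_totalDegree (hs (mem_insert_self m s))
      rw [Finsupp.sum_fintype _ _ (fun _ => rfl)] at this
      simpa using this
  intro i
  refine (hsum _ (Finset.Subset.refl _) i).congr fun α => ?_
  have : α.ev P = ∑ m ∈ P.support, algebraMap K α.L⟦X⟧ (P.coeff m) * (α.x ^ m 0 * α.y ^ m 1) := by
    rw [Arc.ev, MvPolynomial.aeval_def, MvPolynomial.eval₂_eq']
    refine sum_congr rfl fun m _ => ?_
    rw [Fin.prod_univ_two]; rfl
  dsimp only; rw [this]
end Hy
end FatP
end

section
set_option linter.unusedSectionVars false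
open Finset PowerSeries
namespace FatP
variable {K : Type} [Field K]
namespace Dat
variable (D : Dat K) {R : Type} [CommRing R] [Algebra K R]

def dl (x y : R) (b : ℕ) : R :=
  (if b < D.Q then D.lin x * y ^ (D.Q - 1 - b) else 0) -
  x ^ D.Q * ∑ j ∈ range (D.k+1), if b < D.q ^ j then algebraMap K R (D.a j) * y ^ (D.q ^ j - 1 - b) else 0

theorem qj_le {j : ℕ} (hj : j ∈ range (D.k+1)) : D.q ^ j ≤ D.F :=
  Nat.pow_le_pow_right D.q_pos (by simp at hj; omega)

theorem geo (N s : ℕ) (hs : s ≤ N) (y Z c : R) :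
    (∑ b ∈ range N, (if b < s then c * y ^ (s - 1 - b) else 0) * Z ^ b) * (Z - y)
      = c * (Z ^ s - y ^ s) := by
  have h1 : ∑ b ∈ range N, (if b < s then c * y ^ (s - 1 - b) else 0) * Z ^ b
     = c * ∑ b ∈ range s, Z ^ b * y ^ (s - 1 - b) := by
    rw [← Finset.sum_subset (range_subset_range.2 hs), mul_sum]
    · refine sum_congr rfl fun b hb => ?_
      rw [if_pos (mem_range.1 hb)]; ring
    · intro b _ hb
      rw [if_neg (by simpa using hb), zero_mul]
  rw [h1, mul_assoc, (Commute.all Z y).geom_sum₂_mul]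

theorem dl_mul (x y Z : R) : (∑ b ∈ range D.N, D.dl x y b * Z ^ b) * (Z - y) =
    D.lin x * (Z ^ D.Q - y ^ D.Q) - x ^ D.Q * (D.lin Z - D.lin y) := by
  have h1 := geo D.N D.Q D.Q_le y Z (D.lin x)
  have h2 : ∀ j ∈ range (D.k+1), _ := fun j hj =>
    geo D.N (D.q ^ j) ((D.qj_le hj).trans D.F_le) y Z (algebraMap K R (D.a j))
  have h3 := sum_congr rfl h2
  rw [← sum_mul, sum_comm] at h3
  have e1 : D.lin Z - D.lin y = ∑ j ∈ range (D.k+1), algebraMap K R (D.a j) * (Z ^ D.q ^ j - y ^ D.q ^ j) := by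
    simp only [lin, mul_sub, sum_sub_distrib]
  rw [e1, ← h1, ← h3]
  simp only [dl, sub_mul, sum_sub_distrib, mul_assoc, mul_sum, sum_mul]
  
theorem natCast_pow (j : ℕ) : ((D.q ^ (j+1) : ℕ) : R) = 0 := by
  have := D.chp
  have h : ((D.q ^ (j+1) : ℕ) : K) = 0 := by
    rw [CharP.cast_eq_zero_iff K D.p, D.hq, ← pow_mul]
    exact dvd_pow_self _ (by have := D.he; positivity)
  rw [← map_natCast (algebraMap K R), h, map_zero]

theorem geod (N s : ℕ) (hs : s ≤ N) (y c : R) :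
    (∑ b ∈ range N, (if b < s then c * y ^ (s - 1 - b) else 0) * y ^ b) = (s : R) * (c * y ^ (s-1)) := by
  rw [← Finset.sum_subset (range_subset_range.2 hs)]
  · rw [← nsmul_eq_mul]
    conv_rhs => rw [← card_range s, ← sum_const]
    refine sum_congr rfl fun b hb => ?_
    have := mem_range.1 hb
    rw [if_pos this, mul_assoc, ← pow_add, card_range]; congr 2; omega
  · intro b _ hb
    rw [if_neg (by simpa using hb), zero_mul]

theorem dl_diag (x y : R) : ∑ b ∈ range D.N, D.dl x y b * y ^ b = - (algebraMap K R (D.a 0) * x ^ D.Q) := by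
  have h1 := geod D.N D.Q D.Q_le y (D.lin x)
  have h2 : ∀ j ∈ range (D.k+1), _ := fun j hj =>
    geod D.N (D.q ^ j) ((D.qj_le hj).trans D.F_le) y (algebraMap K R (D.a j))
  have h3 := sum_congr rfl h2
  rw [sum_comm] at h3
  have e0 : ((D.Q : ℕ) : R) = 0 := by
    have := D.ht
    have h := D.natCast_pow (R := R) (D.t - 1)
    rwa [Nat.sub_add_cancel this] at h
  rw [e0, zero_mul] at h1
  have h4 : ∑ j ∈ range D.k, ((D.q ^ (j + 1) : ℕ) : R) *
      (algebraMap K R (D.a (j + 1)) * y ^ (D.q ^ (j + 1) - 1)) = 0 :=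
    sum_eq_zero (fun j _ => by rw [natCast_pow, zero_mul])
  rw [sum_range_succ' _ D.k, h4, zero_add] at h3
  simp only [pow_zero, Nat.cast_one, one_mul, tsub_self, mul_one] at h3
  have : ∑ b ∈ range D.N, D.dl x y b * y ^ b = 0 - x ^ D.Q * algebraMap K R (D.a 0) := by
    rw [← h1, ← h3]
    simp only [dl, sub_mul, sum_sub_distrib, mul_assoc, mul_sum, sum_mul]
  rw [this]; ring

theorem dl_Pol (b : ℕ) : Pol D (D.F + D.Q - 1) (fun α => D.dl α.x α.y b) := by
  refine Pol.sub ?_ ?_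
  · by_cases h : b < D.Q
    · simp only [h, if_true]
      exact (Pol.xx.lin.mul (Pol.ypow _)).mono (by omega)
    · simp only [h, if_false]; exact Pol.zero
  · have hF := D.F_two
    have : Pol D (D.F - 1) (fun α => ∑ j ∈ range (D.k+1), if b < D.q ^ j then algebraMap K α.L⟦X⟧ (D.a j) * α.y ^ (D.q ^ j - 1 - b) else 0) := by
      refine Pol.sum _ fun j hj => ?_
      have := D.qj_le hj
      by_cases h : b < D.q ^ j
      · simp only [h, if_true]
        exact Pol.cmul _ ((Pol.ypow _).mono (by omega))
      · simp only [h, if_false]; exact Pol.zero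
    exact ((Pol.xpow D.Q).mul this).mono (by omega)
end Dat

theorem Pol.hy {D : Dat K} {d : ℕ} {θ : (α : Arc D) → α.L⟦X⟧} (h : Pol D d θ) : Hy D d θ := by
  obtain ⟨P, h1, h2⟩ := h
  intro i
  refine ((Hy.poly P i).mono (by omega)).congr fun α => ?_
  rw [h2]

/-- The hyperderivatives of the kernel coefficients. -/
theorem exists_A (D : Dat K) : ∃ A : ℕ → ℕ → MvPolynomial (Fin 2) K,
    (∀ b j, (A b j).totalDegree ≤ D.F + D.Q - 1 + j * (D.N+2)) ∧
    ∀ b j (α : Arc D), α.x ^ ((D.Q+2)*j) * hD j (D.dl α.x α.y b) = α.ev (A b j) := by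
  have := fun b j => (D.dl_Pol b).hy j
  choose A h1 h2 using this
  exact ⟨A, h1, h2⟩
end FatP
end

section
set_option linter.unusedSectionVars false
open Finset PowerSeries
namespace FatP
variable {K : Type} [Field K]

noncomputable abbrev Pd (K : Type) [Field K] (d : ℕ) : Submodule K (MvPolynomial (Fin 2) K) :=
  MvPolynomial.restrictTotalDegree (Fin 2) K d

theorem mem_Pd {d : ℕ} {P : MvPolynomial (Fin 2) K} : P ∈ Pd K d ↔ P.totalDegree ≤ d :=
  MvPolynomial.mem_restrictTotalDegree _ _ _

theorem finrank_Pd (d : ℕ) : 2 * Module.finrank K (Pd K d) = (d+1)*(d+2) := by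
  have h0 : Module.finrank K (Pd K d) =
      Nat.card {n : Fin 2 →₀ ℕ | n.sum (fun _ e => e) ≤ d} :=
    Module.finrank_eq_nat_card_basis (MvPolynomial.basisRestrictSupport K _)
  have h1 : Nat.card {n : Fin 2 →₀ ℕ | n.sum (fun _ e => e) ≤ d} =
      ((range (d+1)).sigma (fun i => range (i+1))).card := by
    rw [← Fintype.card_coe, ← Nat.card_eq_fintype_card]
    have hs : ∀ n : Fin 2 →₀ ℕ, n.sum (fun _ e => e) = n 0 + n 1 := by
      intro n
      rw [Finsupp.sum_fintype _ _ (fun _ => rfl)]; simp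
    refine Nat.card_eq_of_bijective (fun n => ⟨⟨n.1 0 + n.1 1, n.1 0⟩, ?_⟩) ⟨?_, ?_⟩
    · have := n.2
      simp only [Set.mem_ofPred_eq, hs] at this
      simp only [mem_sigma, mem_range]; omega
    · rintro ⟨n, hn⟩ ⟨m, hm⟩ h
      simp only [Subtype.mk.injEq, Sigma.mk.injEq, heq_eq_eq] at h
      ext i
      fin_cases i
      · exact h.2
      · have := h.1; have := h.2; simp only [Fin.mk_one]; omega
    · rintro ⟨⟨i, j⟩, h⟩
      simp only [mem_sigma, mem_range] at h
      refine ⟨⟨Finsupp.equivFunOnFinite.symm ![j, i - j], ?_⟩, ?_⟩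
      · simp only [Set.mem_ofPred_eq, hs]; simp; omega
      · simp; omega
  rw [h0, h1, card_sigma]
  simp only [card_range]
  have := Finset.sum_range_succ' (fun i => i) (d+1)
  simp only [add_zero] at this
  rw [← this, mul_comm, Finset.sum_range_id_mul_two]
  simp; ring

theorem rn {E G : Type} [AddCommGroup E] [Module K E] [AddCommGroup G] [Module K G]
    (f : E →ₗ[K] G) (S : Submodule K E) [Module.Finite K S] :
    Module.finrank K (S.map f) + Module.finrank K ↥(S ⊓ LinearMap.ker f) = Module.finrank K S := by
  have h := LinearMap.finrank_range_add_finrank_ker (f.domRestrict S)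
  rw [LinearMap.range_domRestrict, LinearMap.ker_domRestrict] at h
  rw [← h]
  congr 1
  have e : Submodule.comap S.subtype (LinearMap.ker f) =
     Submodule.comap S.subtype (S ⊓ LinearMap.ker f) := by
    ext z; simp
  rw [e]
  exact (Submodule.comapSubtypeEquivOfLe inf_le_left).finrank_eq.symm

theorem finrank_map_inj {E G : Type} [AddCommGroup E] [Module K E] [AddCommGroup G] [Module K G]
    (f : E →ₗ[K] G) (hf : Function.Injective f) (S : Submodule K E) :
    Module.finrank K (S.map f) = Module.finrank K S :=
  (Submodule.equivMapOfInjective f hf S).finrank_eq.symm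

section hilb
variable (ev : MvPolynomial (Fin 2) K →ₐ[K] K⟦X⟧)

noncomputable def Vd (d : ℕ) : Submodule K K⟦X⟧ := (Pd K d).map ev.toLinearMap

noncomputable instance (d : ℕ) : Module.Finite K (Vd ev d) := by
  unfold Vd; infer_instance

theorem mem_Vd {d : ℕ} {u : K⟦X⟧} : u ∈ Vd ev d ↔ ∃ P : MvPolynomial (Fin 2) K,
    P.totalDegree ≤ d ∧ ev P = u := by
  simp only [Vd, Submodule.mem_map, mem_Pd]; rfl

theorem Vd_mul {d d' : ℕ} {u v : K⟦X⟧} (hu : u ∈ Vd ev d) (hv : v ∈ Vd ev d') :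
    u * v ∈ Vd ev (d + d') := by
  rw [mem_Vd] at *
  obtain ⟨P, h1, rfl⟩ := hu
  obtain ⟨P', h1', rfl⟩ := hv
  exact ⟨P * P', (MvPolynomial.totalDegree_mul _ _).trans (add_le_add h1 h1'), map_mul _ _ _⟩

theorem Vd_mono {d d' : ℕ} (h : d ≤ d') {u : K⟦X⟧} (hu : u ∈ Vd ev d) : u ∈ Vd ev d' := by
  rw [mem_Vd] at *
  obtain ⟨P, h1, rfl⟩ := hu
  exact ⟨P, h1.trans h, rfl⟩

noncomputable def piM (K : Type) [Field K] (M : ℕ) : K⟦X⟧ →ₗ[K] (Fin M → K) :=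
  LinearMap.pi fun i => coeff (i : ℕ)

theorem mem_ker_piM (M : ℕ) (u : K⟦X⟧) : u ∈ LinearMap.ker (piM K M) ↔ X ^ M ∣ u := by
  rw [LinearMap.mem_ker, X_pow_dvd_iff, piM]
  constructor
  · intro h m hm
    exact congrFun h ⟨m, hm⟩
  · intro h
    ext i
    exact h i i.2

variable (x0 : K) (hx : ev (MvPolynomial.X 0) = C x0 + X)
include hx

theorem X_mem (j d : ℕ) (h : j ≤ d) : (X ^ j : K⟦X⟧) ∈ Vd ev d := by
  rw [mem_Vd]
  refine ⟨(MvPolynomial.X 0 - MvPolynomial.C x0) ^ j, ?_, ?_⟩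
  · refine (MvPolynomial.totalDegree_pow _ _).trans ?_
    have : (MvPolynomial.X 0 - MvPolynomial.C x0 : MvPolynomial (Fin 2) K).totalDegree ≤ 1 :=
      (MvPolynomial.totalDegree_sub _ _).trans (by simp)
    nlinarith
  · rw [map_pow, map_sub, hx]
    have : ev (MvPolynomial.C x0) = C x0 := by
      rw [← MvPolynomial.algebraMap_eq, AlgHom.commutes, PowerSeries.algebraMap_apply]; rfl
    rw [this]; ring

theorem Vd_piM (M d : ℕ) (h : M ≤ d + 1) :
    M + Module.finrank K ↥(Vd ev d ⊓ LinearMap.ker (piM K M)) = Module.finrank K (Vd ev d) := by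
  have h1 := rn (piM K M) (Vd ev d)
  have h2 : (Vd ev d).map (piM K M) = ⊤ := by
    rw [eq_top_iff, ← (Pi.basisFun K (Fin M)).span_eq, Submodule.span_le]
    rintro _ ⟨i, rfl⟩
    refine ⟨X ^ (i : ℕ), X_mem ev x0 hx i d (by have := i.2; omega), ?_⟩
    ext j
    simp only [piM, LinearMap.pi_apply, coeff_X_pow, Pi.basisFun_apply, Pi.single_apply]
    simp [Fin.ext_iff]
  rw [h2, finrank_top, Module.finrank_fin_fun] at h1
  exact h1

theorem Vd_ge (d : ℕ) : d + 1 ≤ Module.finrank K (Vd ev d) := by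
  have := Vd_piM ev x0 hx (d+1) d le_rfl
  omega

variable (e : MvPolynomial (Fin 2) K) (he : Prime e) (hev : ev e = 0)
include he hev

theorem dvd_of_ev {h : MvPolynomial (Fin 2) K} (hh : ev h = 0) : e ∣ h := by
  by_contra hdv
  have hh0 : h ≠ 0 := fun h0 => hdv (h0 ▸ dvd_zero _)
  have he0 := he.ne_zero
  set a := e.totalDegree with ha
  set c := h.totalDegree with hc
  set m := a * c with hm
  set n := m + a + c with hn
  have hmul : ∀ u : MvPolynomial (Fin 2) K, u ≠ 0 →
      Function.Injective (LinearMap.mulLeft K u) := fun u hu => by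
    intro p q hpq
    exact mul_left_cancel₀ hu hpq
  set A := (Pd K (m + c)).map (LinearMap.mulLeft K e)
  set B := (Pd K (m + a)).map (LinearMap.mulLeft K h)
  have hA : Module.finrank K A = Module.finrank K (Pd K (m+c)) := finrank_map_inj _ (hmul e he0) _
  have hB : Module.finrank K B = Module.finrank K (Pd K (m+a)) := finrank_map_inj _ (hmul h hh0) _
  have hAB : A ⊓ B ≤ (Pd K m).map (LinearMap.mulLeft K (e * h)) := by
    rintro z ⟨⟨u, hu, rfl⟩, ⟨v, hv, hz⟩⟩
    simp only [LinearMap.mulLeft_apply] at hz ⊢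
    have h1 : e ∣ h * v := ⟨u, hz⟩
    rcases he.dvd_or_dvd h1 with h2 | ⟨w, rfl⟩
    · exact absurd h2 hdv
    · refine ⟨w, ?_, ?_⟩
      · by_cases hw : w = 0
        · rw [hw]; exact Submodule.zero_mem _
        rw [SetLike.mem_coe, mem_Pd] at *
        rw [MvPolynomial.totalDegree_mul_of_isDomain he0 hw] at hv
        omega
      · simp only [LinearMap.mulLeft_apply]; rw [← hz]; ring
  have hAB' := Submodule.finrank_mono hAB
  rw [finrank_map_inj _ (hmul _ (mul_ne_zero he0 hh0))] at hAB'
  have hs := Submodule.finrank_sup_add_finrank_inf_eq A B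
  have hle : A ⊔ B ≤ Pd K n ⊓ LinearMap.ker ev.toLinearMap := by
    refine sup_le ?_ ?_
    · rintro _ ⟨u, hu, rfl⟩
      rw [SetLike.mem_coe, mem_Pd] at hu
      refine ⟨?_, ?_⟩
      · exact mem_Pd.2 ((MvPolynomial.totalDegree_mul _ _).trans (by omega))
      · change ev (e * u) = 0
        rw [map_mul, hev, zero_mul]
    · rintro _ ⟨u, hu, rfl⟩
      rw [SetLike.mem_coe, mem_Pd] at hu
      refine ⟨?_, ?_⟩
      · exact mem_Pd.2 ((MvPolynomial.totalDegree_mul _ _).trans (by omega))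
      · change ev (h * u) = 0
        rw [map_mul, hh, zero_mul]
  have hle' := Submodule.finrank_mono hle
  have hr := rn ev.toLinearMap (Pd K n)
  have hge := Vd_ge ev x0 hx n
  rw [Vd] at hge
  have p1 := finrank_Pd (K := K) n
  have p2 := finrank_Pd (K := K) (m+c)
  have p3 := finrank_Pd (K := K) (m+a)
  have p4 := finrank_Pd (K := K) m
  have : 2 * (n + 1) + (m+c+1)*(m+c+2) + (m+a+1)*(m+a+2) ≤ (n+1)*(n+2) + (m+1)*(m+2) := by omega
  rw [hn] at this
  nlinarith

theorem hilb (d : ℕ) : Module.finrank K (Vd ev (d + e.totalDegree)) + Module.finrank K (Pd K d) =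
    Module.finrank K (Pd K (d + e.totalDegree)) := by
  rw [← rn ev.toLinearMap (Pd K (d + e.totalDegree)), Vd]
  congr 1
  have h1 : Pd K (d + e.totalDegree) ⊓ LinearMap.ker ev.toLinearMap =
     (Pd K d).map (LinearMap.mulLeft K e) := by
    apply le_antisymm
    · rintro z ⟨h1, h2⟩
      obtain ⟨w, rfl⟩ := dvd_of_ev ev x0 hx e he hev (h := z) h2
      refine ⟨w, ?_, rfl⟩
      by_cases hw : w = 0
      · rw [hw]; exact Submodule.zero_mem _
      rw [SetLike.mem_coe, mem_Pd] at *
      rw [MvPolynomial.totalDegree_mul_of_isDomain he.ne_zero hw] at h1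
      omega
    · rintro _ ⟨u, hu, rfl⟩
      rw [SetLike.mem_coe, mem_Pd] at hu
      refine ⟨?_, ?_⟩
      · exact mem_Pd.2 ((MvPolynomial.totalDegree_mul _ _).trans (by omega))
      · change ev (e * u) = 0
        rw [map_mul, hev, zero_mul]
  rw [h1, finrank_map_inj]
  intro p q hpq
  exact mul_left_cancel₀ he.ne_zero hpq

theorem hilb' (d : ℕ) (hd : e.totalDegree ≤ d) :
    2 * (Module.finrank K (Vd ev d) : ℤ) = e.totalDegree * (2 * d - e.totalDegree + 3) := by
  obtain ⟨c, rfl⟩ := Nat.exists_eq_add_of_le' hd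
  have h1 := hilb ev x0 hx e he hev c
  have p1 := finrank_Pd (K := K) c
  have p2 := finrank_Pd (K := K) (c + e.totalDegree)
  zify at *
  linear_combination 2 * h1 - p1 + p2

theorem bezout (W M : ℕ) {u : K⟦X⟧} (hu : u ∈ Vd ev W) (hu0 : u ≠ 0) (hM : X ^ M ∣ u) :
    M ≤ e.totalDegree * W := by
  set T := M + e.totalDegree
  have h1 := Vd_piM ev x0 hx M (W + T) (by omega)
  have h2 : (Vd ev T).map (LinearMap.mulLeft K u) ≤ Vd ev (W+T) ⊓ LinearMap.ker (piM K M) := by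
    rintro _ ⟨v, hv, rfl⟩
    refine ⟨Vd_mul ev hu hv, ?_⟩
    exact (mem_ker_piM M _).2 (Dvd.dvd.mul_right hM v)
  have h3 := Submodule.finrank_mono h2
  rw [finrank_map_inj _ (fun p q hpq => mul_left_cancel₀ hu0 hpq)] at h3
  have p1 := hilb' ev x0 hx e he hev T (by omega)
  have p2 := hilb' ev x0 hx e he hev (W+T) (by omega)
  zify at *
  push_cast at *
  nlinarith
end hilb
end FatP
end

section
set_option linter.unusedSectionVars false
open Finset PowerSeries
namespace FatP
variable {K : Type} [Field K]

theorem pderiv_lin (D : Dat K) (z : MvPolynomial (Fin 2) K) :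
    MvPolynomial.pderiv 1 (D.lin z) = MvPolynomial.C (D.a 0) * MvPolynomial.pderiv 1 z := by
  rw [D.lin_split, map_add, map_sum, sum_eq_zero, add_zero]
  · rw [MvPolynomial.algebraMap_eq, MvPolynomial.pderiv_C_mul]
  · intro j _
    rw [MvPolynomial.algebraMap_eq, MvPolynomial.pderiv_C_mul, Derivation.leibniz_pow, ← Nat.cast_smul_eq_nsmul (MvPolynomial (Fin 2) K),
      D.natCast_pow]
    simp

theorem pderiv_powQ (D : Dat K) (z : MvPolynomial (Fin 2) K) :
    MvPolynomial.pderiv 1 (z ^ D.Q) = 0 := by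
  have h := D.natCast_pow (R := MvPolynomial (Fin 2) K) (D.t - 1)
  rw [Nat.sub_add_cancel D.ht] at h
  rw [Derivation.leibniz_pow, ← Nat.cast_smul_eq_nsmul (MvPolynomial (Fin 2) K), Dat.Q, h]
  simp

theorem pderiv_Th (D : Dat K) : MvPolynomial.pderiv 1 (D.Th (MvPolynomial.X 0) (MvPolynomial.X 1)
    : MvPolynomial (Fin 2) K) = - (MvPolynomial.C (D.a 0) * MvPolynomial.X 0 ^ D.Q) := by
  rw [Dat.Th, map_sub, Derivation.leibniz, Derivation.leibniz, pderiv_powQ, pderiv_powQ, pderiv_lin,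
    pderiv_lin]
  have : MvPolynomial.pderiv (R := K) (1 : Fin 2) (MvPolynomial.X 0) = 0 :=
    MvPolynomial.pderiv_X_of_ne (by decide)
  rw [this]
  simp [mul_comm]

theorem lin_X_deg (D : Dat K) (i : Fin 2) :
    (D.lin (MvPolynomial.X i : MvPolynomial (Fin 2) K)).totalDegree ≤ D.F := by
  rw [Dat.lin]
  refine MvPolynomial.totalDegree_finsetSum_le fun j hj => ?_
  refine (MvPolynomial.totalDegree_mul _ _).trans ?_
  rw [MvPolynomial.algebraMap_eq, MvPolynomial.totalDegree_C, MvPolynomial.totalDegree_X_pow, zero_add]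
  exact D.qj_le hj

theorem Th_deg (D : Dat K) : (D.Th (MvPolynomial.X 0) (MvPolynomial.X 1)
    : MvPolynomial (Fin 2) K).totalDegree ≤ D.F + D.Q := by
  rw [Dat.Th]
  refine (MvPolynomial.totalDegree_sub _ _).trans (max_le ?_ ?_) <;>
  · refine (MvPolynomial.totalDegree_mul _ _).trans ?_
    rw [MvPolynomial.totalDegree_X_pow]
    exact Nat.add_le_add_right (lin_X_deg D _) _

theorem component (D : Dat K) (x0 y0 : K) (y : K⟦X⟧) (hy : D.Th (C x0 + X) y = 0)
    (hy0 : constantCoeff y = y0) (hind : ∀ c : K, c ^ D.q = c → y0 ≠ c * x0)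
    (ev : MvPolynomial (Fin 2) K →ₐ[K] K⟦X⟧) (hev : ev = MvPolynomial.aeval ![C x0 + X, y]) :
    ∃ e ε : MvPolynomial (Fin 2) K, Prime e ∧
      D.Th (MvPolynomial.X 0) (MvPolynomial.X 1) = e * ε ∧ ev e = 0 ∧ ev ε ≠ 0 ∧
      e.totalDegree ≤ D.F + D.Q ∧ ε.totalDegree ≤ D.F + D.Q ∧
      ∀ c : K, c ^ D.q = c → ∀ α : Arc D, α.y = algebraMap K _ c * α.x → α.ev ε = 0 := by
  have e0 : ev (MvPolynomial.X 0) = C x0 + X := by rw [hev]; simp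
  have e1 : ev (MvPolynomial.X 1) = y := by rw [hev]; simp
  have hxne : (C x0 + X : K⟦X⟧) ≠ 0 := by
    intro h
    have := congrArg (coeff 1) h
    simp [coeff_C, coeff_one_X] at this
  have hTh0 : ev (D.Th (MvPolynomial.X 0) (MvPolynomial.X 1)) = 0 := by
    rw [D.Th_map, e0, e1, hy]
  have hdT : ev (MvPolynomial.pderiv 1 (D.Th (MvPolynomial.X 0) (MvPolynomial.X 1))) ≠ 0 := by
    rw [pderiv_Th, map_neg, neg_ne_zero, map_mul, map_pow, e0, ← MvPolynomial.algebraMap_eq,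
      AlgHom.commutes]
    exact mul_ne_zero (by simpa using D.ha0) (pow_ne_zero _ hxne)
  have hTne : (D.Th (MvPolynomial.X 0) (MvPolynomial.X 1) : MvPolynomial (Fin 2) K) ≠ 0 := by
    intro h
    rw [h] at hdT
    simp at hdT
  obtain ⟨f, hf1, hf2⟩ := UniqueFactorizationMonoid.exists_prime_factors _ hTne
  have hf3 : ev f.prod = 0 := by
    obtain ⟨u, hu⟩ := hf2
    rw [← hu, map_mul] at hTh0
    rcases mul_eq_zero.1 hTh0 with h | h
    · exact h
    · exact absurd h ((u.isUnit.map ev).ne_zero)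
  rw [map_multiset_prod, Multiset.prod_eq_zero_iff, Multiset.mem_map] at hf3
  obtain ⟨e, hef, hee⟩ := hf3
  have hep := hf1 e hef
  obtain ⟨ε, hε⟩ := (Multiset.dvd_prod hef).trans hf2.dvd
  have hεne : ε ≠ 0 := fun h => hTne (by rw [hε, h, mul_zero])
  have hdeg := Th_deg D
  rw [hε, MvPolynomial.totalDegree_mul_of_isDomain hep.ne_zero hεne] at hdeg
  refine ⟨e, ε, hep, hε, hee, ?_, by omega, by omega, ?_⟩
  · intro h
    apply hdT
    rw [hε, Derivation.leibniz, map_add]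
    simp [h, hee]
  · intro c hc α hα
    let ψ : MvPolynomial (Fin 2) K →ₐ[K] Polynomial K :=
      MvPolynomial.aeval ![Polynomial.X, Polynomial.C c * Polynomial.X]
    have p0 : ψ (MvPolynomial.X 0) = Polynomial.X := by simp [ψ]
    have p1 : ψ (MvPolynomial.X 1) = Polynomial.C c * Polynomial.X := by simp [ψ]
    have hψ : ψ (e * ε) = 0 := by
      rw [← hε, D.Th_map, p0, p1]
      exact D.Th_fix (by rw [← map_pow, hc]) _
    rw [map_mul] at hψ
    have key : ψ e ≠ 0 := by
      intro h
      set P : MvPolynomial (Fin 2) K := MvPolynomial.X 1 - MvPolynomial.C c * MvPolynomial.X 0 with hP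
      have hPe : P ∣ e := by
        rw [← Ideal.mem_span_singleton, ← Ideal.Quotient.eq_zero_iff_mem]
        set mk := Ideal.Quotient.mkₐ K (Ideal.span {P})
        have hmk : mk = (Polynomial.aeval (mk (MvPolynomial.X 0))).comp ψ := by
          apply MvPolynomial.algHom_ext
          intro i
          fin_cases i
          · change mk (MvPolynomial.X 0) = Polynomial.aeval _ (ψ (MvPolynomial.X 0))
            rw [p0, Polynomial.aeval_X]
          · change mk (MvPolynomial.X 1) = Polynomial.aeval _ (ψ (MvPolynomial.X 1))
            rw [p1, map_mul, Polynomial.aeval_X, Polynomial.aeval_C]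
            have : mk (MvPolynomial.X 1 - MvPolynomial.C c * MvPolynomial.X 0) = 0 := Ideal.Quotient.eq_zero_iff_mem.2 (Ideal.mem_span_singleton_self P)
            rw [map_sub, map_mul, ← MvPolynomial.algebraMap_eq, AlgHom.commutes] at this
            exact sub_eq_zero.1 this
        change mk e = 0
        rw [hmk]
        change Polynomial.aeval _ (ψ e) = 0
        rw [h, map_zero]
      obtain ⟨w, hw⟩ := hPe
      have hconst : MvPolynomial.constantCoeff P = 0 := by simp [hP]
      rcases hep.irreducible.isUnit_or_isUnit hw with h1 | h1
      · have := h1.map (MvPolynomial.constantCoeff (R := K) (σ := Fin 2))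
        rw [hconst] at this
        exact not_isUnit_zero this
      · rw [hw, map_mul] at hee
        rcases mul_eq_zero.1 hee with h2 | h2
        · rw [hP, map_sub, map_mul, e0, e1, ← MvPolynomial.algebraMap_eq, AlgHom.commutes, sub_eq_zero] at h2
          apply hind c hc
          rw [← hy0, h2, PowerSeries.algebraMap_apply]
          simp
        · exact (h1.map ev).ne_zero h2
    have hε0 := (mul_eq_zero.1 hψ).resolve_left key
    have hαev : α.ev = (Polynomial.aeval α.x).comp ψ := by
      apply MvPolynomial.algHom_ext
      intro i
      fin_cases i
      · change α.ev (MvPolynomial.X 0) = Polynomial.aeval _ (ψ (MvPolynomial.X 0))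
        rw [p0, Polynomial.aeval_X, α.ev_X0]
      · change α.ev (MvPolynomial.X 1) = Polynomial.aeval _ (ψ (MvPolynomial.X 1))
        rw [p1, map_mul, Polynomial.aeval_X, Polynomial.aeval_C, α.ev_X1, hα]
    rw [hαev]
    change Polynomial.aeval _ (ψ ε) = 0
    rw [hε0, map_zero]
end FatP
end

section
set_option linter.unusedSectionVars false
open Finset PowerSeries
namespace FatP
variable {K : Type} [Field K]

theorem siegel (D : Dat K) (ev : MvPolynomial (Fin 2) K →ₐ[K] K⟦X⟧)
    (x0 : K) (hx : ev (MvPolynomial.X 0) = C x0 + X)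
    (e : MvPolynomial (Fin 2) K) (he : Prime e) (hev : ev e = 0) (hdeg : e.totalDegree ≤ D.F + D.Q)
    (A : ℕ → ℕ → MvPolynomial (Fin 2) K)
    (hA : ∀ b j, (A b j).totalDegree ≤ D.F + D.Q - 1 + j * (D.N+2))
    (ν β S : ℕ) (hβ : β + D.N = D.N * D.N + 2 * D.N * ν) (hS : S = β * (D.N+2) + 2 * (D.F + D.Q)) :
    ∃ (i0 : ℕ) (v : ℕ → MvPolynomial (Fin 2) K), i0 < β ∧
      (∀ i, i < β → (v i).totalDegree ≤ S - i * (D.N+2)) ∧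
      ev (v i0) ≠ 0 ∧
      ∀ b < D.N, ∀ l < b + ν, ev (∑ i ∈ Ico l (i0+1), v i * A b (i - l)) = 0 := by
  classical
  have hN2 : 2 ≤ D.N := D.Q_two.trans D.Q_le
  have hβ0 : 0 < β := by nlinarith
  have hDe : 0 < e.totalDegree := by
    by_contra h0
    have h1 : e.totalDegree = 0 := by omega
    rw [MvPolynomial.totalDegree_eq_zero_iff_eq_C] at h1
    rw [h1, ← MvPolynomial.algebraMap_eq, AlgHom.commutes] at hev
    have h2 : MvPolynomial.coeff 0 e = 0 := by simpa using hev
    rw [h2, map_zero] at h1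
    exact he.ne_zero h1
  set G := S + D.F + D.Q with hG
  let I := (b : Fin D.N) × Fin (b + ν)
  let comp : (p : I) → ((i : Fin β) → Vd ev (S - i * (D.N+2))) →ₗ[K] K⟦X⟧ := fun p =>
    ∑ i : Fin β, if (p.2 : ℕ) ≤ i then (LinearMap.mulRight K (ev (A p.1 (i - p.2)))) ∘ₗ
      (Vd ev (S - i * (D.N+2))).subtype ∘ₗ (LinearMap.proj i) else 0
  have hcomp : ∀ p w, comp p w = ∑ i : Fin β, if (p.2 : ℕ) ≤ i then
      (w i : K⟦X⟧) * ev (A p.1 (i - p.2)) else 0 := by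
    intro p w
    simp only [comp, LinearMap.sum_apply]
    refine sum_congr rfl fun i _ => ?_
    split_ifs <;> simp
  have hmem : ∀ p w, comp p w ∈ Vd ev G := by
    intro p w
    rw [hcomp]
    refine Submodule.sum_mem _ fun i _ => ?_
    split_ifs with hle
    · have h1 : ev (A p.1 (i - p.2)) ∈ Vd ev (D.F + D.Q - 1 + (i - p.2) * (D.N+2)) :=
        (mem_Vd ev).2 ⟨_, hA _ _, rfl⟩
      refine Vd_mono ev ?_ (Vd_mul ev (w i).2 h1)
      have hi := i.2
      have h2 : (i : ℕ) * (D.N+2) ≤ S := by nlinarith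
      have h3 : ((i : ℕ) - p.2) * (D.N+2) ≤ (i : ℕ) * (D.N+2) := Nat.mul_le_mul_right _ (by omega)
      omega
    · exact Submodule.zero_mem _
  let Λ : ((i : Fin β) → Vd ev (S - i * (D.N+2))) →ₗ[K] (I → Vd ev G) :=
    LinearMap.pi fun p => (comp p).codRestrict _ (hmem p)
  have hlt : Module.finrank K (I → Vd ev G) <
      Module.finrank K ((i : Fin β) → Vd ev (S - i * (D.N+2))) := by
    rw [Module.finrank_pi_fintype, Module.finrank_pi_fintype, sum_const, smul_eq_mul, card_univ]
    have hcard : 2 * Fintype.card I = β := by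
      simp only [I, Fintype.card_sigma, Fintype.card_fin]
      rw [Fin.sum_univ_eq_sum_range (fun b => b + ν), sum_add_distrib, sum_const, card_range, mul_add,
        mul_comm 2 (∑ i ∈ range D.N, i), Finset.sum_range_id_mul_two, smul_eq_mul]
      obtain ⟨M, hM⟩ : ∃ M, D.N = M + 1 := ⟨D.N - 1, by omega⟩
      rw [hM] at hβ ⊢
      simp only [Nat.add_sub_cancel]
      nlinarith
    have hG' := hilb' ev x0 hx e he hev G (by omega)
    have hi' : ∀ i : Fin β, 2 * (Module.finrank K (Vd ev (S - i * (D.N+2))) : ℤ) =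
       e.totalDegree * (2 * S - e.totalDegree + 3) - 2 * e.totalDegree * (D.N+2) * (i : ℕ) := by
      intro i
      have hi := i.2
      have h2 : (i : ℕ) * (D.N+2) + (D.F + D.Q) ≤ S := by nlinarith
      have h3 := hilb' ev x0 hx e he hev (S - i * (D.N+2)) (by omega)
      rw [h3, Nat.cast_sub (by omega)]
      push_cast; ring
    have hsum : 2 * ((∑ i : Fin β, Module.finrank K (Vd ev (S - i * (D.N+2))) : ℕ) : ℤ) =
       β * (e.totalDegree * (2 * S - e.totalDegree + 3)) - e.totalDegree * (D.N+2) * (β * (β - 1)) := by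
      rw [Nat.cast_sum, mul_sum, sum_congr rfl (fun i _ => hi' i), sum_sub_distrib, sum_const,
        ← mul_sum, card_univ, Fintype.card_fin, nsmul_eq_mul]
      rw [Fin.sum_univ_eq_sum_range (fun i => (i : ℤ)) β]
      have h5 : (∑ i ∈ range β, (i : ℤ)) * 2 = β * (β - 1) := by
        have := Finset.sum_range_id_mul_two β
        zify at this
        rw [this, Nat.cast_sub (by omega)]; simp
      linear_combination (-(e.totalDegree : ℤ) * (D.N + 2)) * h5
    zify at *
    have hm1 : 4 * ((Fintype.card I : ℤ) * (Module.finrank K (Vd ev G) : ℤ)) =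
       β * (e.totalDegree * (2 * G - e.totalDegree + 3)) := by
      rw [← hG', ← hcard]; ring
    have hpos : 0 < (β : ℤ) * e.totalDegree := mul_pos hβ0 hDe
    have hin : 2 * (G : ℤ) - e.totalDegree + 3 + 1 ≤ 2 * (2 * S - e.totalDegree + 3) - 2 * (D.N + 2) * (β - 1) := by
      rw [hG, hS]; push_cast; nlinarith
    have := mul_le_mul_of_nonneg_left hin hpos.le
    nlinarith
  have hker := LinearMap.ker_ne_bot_of_finrank_lt (f := Λ) hlt
  obtain ⟨w, hw, hw0⟩ := Submodule.exists_mem_ne_zero_of_ne_bot hker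
  have hwz : ∀ p, comp p w = 0 := by
    intro p
    have := congrArg Subtype.val (congrFun hw p)
    exact this
  -- lift
  have hl : ∀ i : Fin β, ∃ P : MvPolynomial (Fin 2) K, P.totalDegree ≤ S - i * (D.N+2) ∧ ev P = w i :=
    fun i => (mem_Vd ev).1 (w i).2
  choose P hP1 hP2 using hl
  let v : ℕ → MvPolynomial (Fin 2) K := fun i => if h : i < β then P ⟨i, h⟩ else 0
  have hv : ∀ i : Fin β, ev (v i) = w i := by
    intro i; simp only [v, i.2, dif_pos, hP2]
  have hex : ∃ i, i < β ∧ ev (v i) ≠ 0 := by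
    by_contra hcon
    push Not at hcon
    apply hw0
    ext1 i
    apply Subtype.ext
    rw [← hv]
    exact hcon i i.2
  let s := (range β).filter (fun i => ev (v i) ≠ 0)
  have hsne : s.Nonempty := by
    obtain ⟨i, h1, h2⟩ := hex
    exact ⟨i, by simp [s, h1, h2]⟩
  set i0 := s.max' hsne with hi0
  have hi0s : i0 ∈ s := s.max'_mem hsne
  have hi0s' : i0 < β ∧ ev (v i0) ≠ 0 := by simpa [s] using hi0s
  refine ⟨i0, v, hi0s'.1, ?_, hi0s'.2, ?_⟩
  · intro i hi
    simp only [v, hi, dif_pos]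
    exact hP1 _
  · intro b hb l hl
    have h1 := hwz ⟨⟨b, hb⟩, ⟨l, hl⟩⟩
    rw [hcomp] at h1
    simp only [← hv] at h1
    rw [Fin.sum_univ_eq_sum_range (fun i => if l ≤ i then ev (v i) * ev (A b (i - l)) else 0),
      ← sum_filter] at h1
    rw [map_sum]
    rw [← h1]
    simp only [map_mul]
    refine sum_subset ?_ ?_
    · intro i hi
      simp only [mem_Ico, mem_filter, mem_range] at *
      omega
    · intro i hi hi'
      simp only [mem_Ico, mem_filter, mem_range] at *
      have : ev (v i) = 0 := by
        by_contra hne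
        have := s.le_max' i (by simp [s, hi.1, hne])
        omega
      rw [this, zero_mul]
end FatP
end

section
set_option linter.unusedSectionVars false
open Finset PowerSeries
namespace FatP
variable {K : Type} [Field K]

def Red (D : Dat K) (P : Polynomial K) (r B : ℕ) (θ : (α : Arc D) → α.L⟦X⟧) : Prop :=
  ∃ R : ℕ → Polynomial K, (∀ b, (R b).natDegree ≤ B) ∧
    ∀ α : Arc D, Polynomial.aeval α.x P ^ r * θ α =
      ∑ b ∈ range D.N, Polynomial.aeval α.x (R b) * α.y ^ b

namespace Red
variable {D : Dat K} {P : Polynomial K} {r B B' : ℕ} {θ θ' : (α : Arc D) → α.L⟦X⟧}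

theorem mono (h : Red D P r B θ) (hd : B ≤ B') : Red D P r B' θ := by
  obtain ⟨R, h1, h2⟩ := h
  exact ⟨R, fun b => (h1 b).trans hd, h2⟩

theorem congr (h : Red D P r B θ) (he : ∀ α, θ' α = θ α) : Red D P r B θ' := by
  obtain ⟨R, h1, h2⟩ := h
  exact ⟨R, h1, fun α => by rw [he, h2]⟩

theorem zero : Red D P r B (fun _ => 0) := ⟨fun _ => 0, by simp, fun α => by simp⟩

theorem add (h : Red D P r B θ) (h' : Red D P r B θ') : Red D P r B (fun α => θ α + θ' α) := by
  obtain ⟨R, h1, h2⟩ := h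
  obtain ⟨R', h1', h2'⟩ := h'
  refine ⟨fun b => R b + R' b, fun b => Polynomial.natDegree_add_le_of_degree_le (h1 b) (h1' b),
    fun α => ?_⟩
  dsimp only
  rw [mul_add, h2, h2', ← sum_add_distrib]
  exact sum_congr rfl fun b _ => by rw [map_add]; ring

theorem cmul (c : K) (h : Red D P r B θ) :
    Red D P r B (fun α => algebraMap K α.L⟦X⟧ c * θ α) := by
  obtain ⟨R, h1, h2⟩ := h
  refine ⟨fun b => Polynomial.C c * R b, fun b => (Polynomial.natDegree_C_mul_le _ _).trans (h1 b),
    fun α => ?_⟩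
  dsimp only
  rw [mul_left_comm, h2, mul_sum]
  exact sum_congr rfl fun b _ => by rw [map_mul, Polynomial.aeval_C]; ring

theorem sum {ι : Type} (s : Finset ι) (Θ : ι → (α : Arc D) → α.L⟦X⟧)
    (h : ∀ i ∈ s, Red D P r B (Θ i)) : Red D P r B (fun α => ∑ i ∈ s, Θ i α) := by
  classical
  induction s using Finset.induction_on with
  | empty => exact zero.congr fun α => by simp
  | insert i s hi ih =>
    exact ((h i (mem_insert_self _ _)).add (ih fun j hj => h j (mem_insert_of_mem hj))).congr
      fun α => by rw [sum_insert hi]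
end Red

theorem exists_P1 (D : Dat K) : ∃ P : Polynomial K, P ≠ 0 ∧ P.natDegree ≤ D.Np ∧
    (∃ (ι : Type) (s : Finset ι) (c : ι → K) (j e : ι → ℕ), (∀ i ∈ s, e i ≤ D.Np ∧ j i + e i ≤ D.N + D.Np) ∧
      ∀ α : Arc D, Polynomial.aeval α.x P * α.y ^ D.N =
        ∑ i ∈ s, algebraMap K α.L⟦X⟧ (c i) * (α.x ^ j i * α.y ^ e i)) ∧
    ∀ x1 : K, Polynomial.eval x1 P ≠ 0 → ∀ (L : Type) [Field L] [Algebra K L],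
      (D.Th (Polynomial.C (algebraMap K L x1)) Polynomial.X : Polynomial L).natDegree = D.N := by
  have hlt : D.Np < D.N := by
    rw [D.N_eq]; nlinarith [D.q_two, D.Np_le, D.q_pos]
  rcases D.FQ_cases with ⟨hF, hQ⟩ | ⟨hQ, hF⟩
  · have hkN : D.q ^ D.k = D.N := hF
    have hj : ∀ j ∈ range D.k, D.q ^ j ≤ D.Np := by
      intro j hj
      refine Nat.pow_le_pow_right D.q_pos ?_
      have := mem_range.1 hj
      have := le_max_left D.k D.t
      omega
    refine ⟨Polynomial.C (D.a D.k) * Polynomial.X ^ D.Q, ?_, ?_, ?_, ?_⟩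
    · exact mul_ne_zero (by simpa using D.hak) (by simp)
    · exact (Polynomial.natDegree_C_mul_X_pow_le _ _).trans hQ
    · refine ⟨ℕ ⊕ ℕ, (range (D.k+1)).disjSum (range D.k), Sum.elim (fun j => D.a j) (fun j => - D.a j),
        Sum.elim (fun j => D.q ^ j) (fun _ => D.Q), Sum.elim (fun _ => D.Q) (fun j => D.q ^ j), ?_, ?_⟩
      · rintro (i | i) hi
        · simp only [Sum.elim_inl]
          have h1 : i ∈ range (D.k+1) := by simpa using hi
          have := D.qj_le h1
          omega
        · simp only [Sum.elim_inr]
          have h1 : i ∈ range D.k := by simpa using hi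
          have := hj i h1
          omega
      · intro α
        rw [sum_disjSum]
        simp only [Sum.elim_inl, Sum.elim_inr]
        have h := α.hx
        rw [Dat.Th, sub_eq_zero] at h
        have h2 : D.lin α.y = ∑ j ∈ range D.k, algebraMap K α.L⟦X⟧ (D.a j) * α.y ^ D.q ^ j +
            algebraMap K α.L⟦X⟧ (D.a D.k) * α.y ^ D.N := by
          rw [Dat.lin, sum_range_succ, hkN]
        have h3 : ∑ j ∈ range (D.k+1), algebraMap K α.L⟦X⟧ (D.a j) * (α.x ^ D.q ^ j * α.y ^ D.Q) =
            D.lin α.x * α.y ^ D.Q := by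
          rw [Dat.lin, sum_mul]
          exact sum_congr rfl fun _ _ => by ring
        have h4 : ∑ j ∈ range D.k, algebraMap K α.L⟦X⟧ (-D.a j) * (α.x ^ D.Q * α.y ^ D.q ^ j) =
            - (α.x ^ D.Q * ∑ j ∈ range D.k, algebraMap K α.L⟦X⟧ (D.a j) * α.y ^ D.q ^ j) := by
          rw [mul_sum, ← sum_neg_distrib]
          exact sum_congr rfl fun _ _ => by rw [map_neg]; ring
        rw [h3, h4, h, h2, map_mul, map_pow, Polynomial.aeval_C, Polynomial.aeval_X]
        ring
    · intro x1 hx1 L _ _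
      have hx2 : D.a D.k * x1 ^ D.Q ≠ 0 := by simpa using hx1
      have e1 : (D.Th (Polynomial.C (algebraMap K L x1)) Polynomial.X : Polynomial L) =
          (D.lin (Polynomial.C (algebraMap K L x1)) * Polynomial.X ^ D.Q -
          (∑ j ∈ range D.k, Polynomial.C (algebraMap K L (D.a j)) * Polynomial.X ^ D.q ^ j) *
            Polynomial.C (algebraMap K L x1) ^ D.Q) +
          Polynomial.C (algebraMap K L (- (D.a D.k * x1 ^ D.Q))) * Polynomial.X ^ D.N := by
        have : (D.lin Polynomial.X : Polynomial L) = ∑ j ∈ range D.k, Polynomial.C (algebraMap K L (D.a j)) * Polynomial.X ^ D.q ^ j +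
            Polynomial.C (algebraMap K L (D.a D.k)) * Polynomial.X ^ D.N := by
          rw [Dat.lin, sum_range_succ, hkN]; rfl
        rw [Dat.Th, this, map_neg, map_mul, map_pow, Polynomial.C_neg, Polynomial.C_mul, Polynomial.C_pow]
        ring
      have e2 : (D.lin (Polynomial.C (algebraMap K L x1)) : Polynomial L) = Polynomial.C (algebraMap K L (D.lin x1)) := by
        simp only [Dat.lin]
        simp [Polynomial.algebraMap_apply]
      rw [e1, e2, Polynomial.natDegree_add_eq_right_of_natDegree_lt, Polynomial.natDegree_C_mul_X_pow]
      · simpa using hx2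
      · rw [Polynomial.natDegree_C_mul_X_pow _ _ (by simpa using hx2)]
        refine lt_of_le_of_lt ?_ hlt
        refine (Polynomial.natDegree_sub_le _ _).trans (max_le (LE.le.trans (Polynomial.natDegree_C_mul_X_pow_le (R := L) _ _) hQ) ?_)
        rw [← Polynomial.C_pow]
        refine (Polynomial.natDegree_mul_C_le _ _).trans ?_
        refine Polynomial.natDegree_sum_le_of_forall_le _ _ fun j h => ?_
        exact (Polynomial.natDegree_C_mul_X_pow_le _ _).trans (hj j h)
  · have hPn : (D.lin (Polynomial.X : Polynomial K)).natDegree ≤ D.F := by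
      rw [Dat.lin]
      exact Polynomial.natDegree_sum_le_of_forall_le _ _ fun j h =>
          (Polynomial.natDegree_C_mul_X_pow_le _ _).trans (D.qj_le h)
    have hae : ∀ (R : Type) [CommRing R] [Algebra K R] (x : R), Polynomial.aeval x (D.lin (Polynomial.X : Polynomial K)) = D.lin x := by
      intro R _ _ x
      rw [D.lin_map, Polynomial.aeval_X]
    refine ⟨D.lin Polynomial.X, ?_, hPn.trans hF, ?_, ?_⟩
    · intro h
      have := congrArg (fun f => Polynomial.coeff f 1) h
      simp only [Dat.lin, Polynomial.finsetSum_coeff, Polynomial.coeff_zero] at this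
      rw [sum_range_succ', sum_eq_zero] at this
      · simp at this
        exact D.ha0 this
      · intro j _
        rw [Polynomial.algebraMap_apply, Polynomial.coeff_C_mul_X_pow, if_neg]
        have := D.q_two
        have := Nat.one_lt_pow (n := j+1) (by omega) this
        omega
    · refine ⟨ℕ, range (D.k+1), D.a, fun _ => D.Q, fun j => D.q ^ j, ?_, ?_⟩
      · intro i hi
        have := D.qj_le hi
        dsimp only
        constructor <;> omega
      · intro α
        have h := α.hx
        rw [Dat.Th, sub_eq_zero] at h
        rw [hae, ← hQ, h, Dat.lin, sum_mul]
        exact sum_congr rfl fun _ _ => by ring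
    · intro x1 hx1 L _ _
      have hx2 : D.lin x1 ≠ 0 := by
        rwa [← Polynomial.coe_aeval_eq_eval, hae] at hx1
      have e2 : (D.lin (Polynomial.C (algebraMap K L x1)) : Polynomial L) = Polynomial.C (algebraMap K L (D.lin x1)) := by
        simp only [Dat.lin]
        simp [Polynomial.algebraMap_apply]
      have hd : (D.lin (Polynomial.X : Polynomial L)).natDegree ≤ D.F := by
        rw [Dat.lin]
        exact Polynomial.natDegree_sum_le_of_forall_le _ _ fun j h =>
          (Polynomial.natDegree_C_mul_X_pow_le _ _).trans (D.qj_le h)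
      have hx3 : algebraMap K L (D.lin x1) ≠ 0 := by simpa using hx2
      rw [Dat.Th, e2, Polynomial.natDegree_sub_eq_left_of_natDegree_lt, Polynomial.natDegree_C_mul_X_pow _ _ hx3, hQ]
      rw [Polynomial.natDegree_C_mul_X_pow _ _ hx3, hQ, ← Polynomial.C_pow]
      exact lt_of_le_of_lt ((Polynomial.natDegree_mul_C_le _ _).trans (hd.trans hF)) hlt

theorem red_mon (D : Dat K) (P : Polynomial K) (hPd : P.natDegree ≤ D.Np)
    (hP : ∃ (ι : Type) (s : Finset ι) (c : ι → K) (j e : ι → ℕ), (∀ i ∈ s, e i ≤ D.Np ∧ j i + e i ≤ D.N + D.Np) ∧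
      ∀ α : Arc D, Polynomial.aeval α.x P * α.y ^ D.N =
        ∑ i ∈ s, algebraMap K α.L⟦X⟧ (c i) * (α.x ^ j i * α.y ^ e i)) (r : ℕ) :
    ∀ i e, e + 1 + r * D.Np ≤ D.N + r * D.N →
      Red D P r (i + e + r * D.Np) (fun α => α.x ^ i * α.y ^ e) := by
  obtain ⟨ι, s, c, j, e', hs, hP⟩ := hP
  have small : ∀ r i e, e < D.N → Red D P r (i + e + r * D.Np) (fun α => α.x ^ i * α.y ^ e) := by
    intro r i e he
    refine ⟨fun b => if b = e then P ^ r * Polynomial.X ^ i else 0, ?_, ?_⟩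
    · intro b
      dsimp only
      split_ifs
      · refine Polynomial.natDegree_mul_le.trans ?_
        have := Polynomial.natDegree_pow_le (p := P) (n := r)
        have := Nat.mul_le_mul_left r hPd
        rw [Polynomial.natDegree_X_pow]
        omega
      · simp
    · intro α
      rw [sum_eq_single e]
      · simp; ring
      · intro b _ hb; simp [hb]
      · intro h; exact absurd (mem_range.2 he) h
  induction r with
  | zero => intro i e h; exact small 0 i e (by omega)
  | succ r ih =>
    intro i e h
    rcases lt_or_ge e D.N with he | he
    · exact small _ i e he
    · have h1 : Red D P r (i + e + (r+1) * D.Np) (fun α => ∑ z ∈ s, algebraMap K α.L⟦X⟧ (c z) *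
          (α.x ^ (i + j z) * α.y ^ (e - D.N + e' z))) := by
        refine Red.sum s _ fun z hz => Red.cmul _ ((ih _ _ ?_).mono ?_)
        · have := hs z hz
          rw [add_mul, add_mul] at h
          omega
        · have := hs z hz
          rw [add_mul]
          omega
      obtain ⟨R, h2, h3⟩ := h1
      refine ⟨R, h2, fun α => ?_⟩
      rw [← h3]
      dsimp only
      have : α.y ^ e = α.y ^ (e - D.N) * α.y ^ D.N := by rw [← pow_add]; congr 1; omega
      rw [this, pow_succ]
      calc _ = Polynomial.aeval α.x P ^ r * (α.x ^ i * α.y ^ (e - D.N) * (Polynomial.aeval α.x P * α.y ^ D.N)) := by ring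
        _ = _ := by
          rw [hP, mul_sum]
          congr 1
          exact sum_congr rfl fun _ _ => by ring
end FatP
end

section
set_option linter.unusedSectionVars false
open Finset PowerSeries
namespace FatP
variable {K : Type} [Field K]

theorem Th_sep (D : Dat K) (L : Type) [Field L] [Algebra K L] (x1 : L) (hx1 : x1 ≠ 0) :
    (D.Th (Polynomial.C x1) Polynomial.X : Polynomial L).Separable := by
  have hq0 : ∀ j, ((D.q ^ (j+1) : ℕ) : L) = 0 := fun j => D.natCast_pow (R := L) j
  have h1 : Polynomial.derivative (Polynomial.X ^ D.Q : Polynomial L) = 0 := by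
    rw [Polynomial.derivative_X_pow]
    have := hq0 (D.t - 1)
    rw [Nat.sub_add_cancel D.ht] at this
    rw [Dat.Q, this]; simp
  have h2 : Polynomial.derivative (D.lin Polynomial.X : Polynomial L) = Polynomial.C (algebraMap K L (D.a 0)) := by
    rw [D.lin_split, map_add, map_sum, sum_eq_zero, add_zero]
    · rw [Polynomial.algebraMap_apply]; simp
    · intro j _
      rw [Polynomial.algebraMap_apply, Polynomial.derivative_C_mul, Polynomial.derivative_X_pow, hq0]
      simp
  have e2 : ∃ u : L, (D.lin (Polynomial.C x1) : Polynomial L) = Polynomial.C u := by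
    refine ⟨D.lin x1, ?_⟩
    simp only [Dat.lin]
    simp [Polynomial.algebraMap_apply]
  obtain ⟨u, hu⟩ := e2
  have h3 : Polynomial.derivative (D.Th (Polynomial.C x1) Polynomial.X : Polynomial L) =
      Polynomial.C (- (algebraMap K L (D.a 0) * x1 ^ D.Q)) := by
    rw [Dat.Th, hu, ← Polynomial.C_pow, Polynomial.derivative_sub, Polynomial.derivative_C_mul, h1,
      Polynomial.derivative_mul, h2, Polynomial.derivative_C]
    simp
  rw [Polynomial.Separable, h3]
  refine isCoprime_of_isUnit_right ?_
  rw [Polynomial.isUnit_C, isUnit_iff_ne_zero]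
  exact neg_ne_zero.2 (mul_ne_zero (by simpa using D.ha0) (pow_ne_zero _ hx1))
where
  isCoprime_of_isUnit_right {R : Type} [CommRing R] {a b : R} (h : IsUnit b) : IsCoprime a b := by
    obtain ⟨u, rfl⟩ := h
    exact ⟨0, ↑u⁻¹, by simp⟩

theorem aeval_coe_const {L : Type} [Field L] [Algebra K L] (x : L⟦X⟧) (P : Polynomial K) :
    constantCoeff (Polynomial.aeval x P) = Polynomial.aeval (constantCoeff x) P := by
  induction P using Polynomial.induction_on' with
  | add p q hp hq => simp [hp, hq]
  | monomial n a => simp [Polynomial.aeval_monomial, PowerSeries.algebraMap_apply]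

theorem const_Th (D : Dat K) {L : Type} [Field L] [Algebra K L] (x y : L⟦X⟧) :
    constantCoeff (D.Th x y) = D.Th (constantCoeff x) (constantCoeff y) := by
  have hl : ∀ z : L⟦X⟧, constantCoeff (D.lin z) = D.lin (constantCoeff z) := by
    intro z
    simp [Dat.lin, PowerSeries.algebraMap_apply]
  simp [Dat.Th, hl]

theorem zero_local (D : Dat K) (x1 : K) (hx1 : x1 ≠ 0)
    (hdeg : ∀ (L : Type) [Field L] [Algebra K L],
      (D.Th (Polynomial.C (algebraMap K L x1)) Polynomial.X : Polynomial L).natDegree = D.N)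
    (R : ℕ → Polynomial K) (M : ℕ)
    (h : ∀ α : Arc D, α.x1 = algebraMap K α.L x1 →
      X ^ M ∣ ∑ b ∈ range D.N, Polynomial.aeval α.x (R b) * α.y ^ b) :
    ∀ m ≤ M, ∀ b < D.N, (Polynomial.X - Polynomial.C x1) ^ m ∣ R b := by
  classical
  intro m
  induction m with
  | zero => intro _ b _; simp
  | succ m ih =>
    intro hm
    have ih := ih (by omega)
    have : ∀ b, ∃ T : Polynomial K, b < D.N → R b = (Polynomial.X - Polynomial.C x1) ^ m * T := by
      intro b
      by_cases hb : b < D.N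
      · obtain ⟨T, hT⟩ := ih b hb
        exact ⟨T, fun _ => hT⟩
      · exact ⟨0, fun h => absurd h hb⟩
    choose T hT using this
    let L := AlgebraicClosure K
    set G : Polynomial L := D.Th (Polynomial.C (algebraMap K L x1)) Polynomial.X with hG
    have hx1L : algebraMap K L x1 ≠ 0 := by simpa using hx1
    have hroots : ∀ y1 : L, G.IsRoot y1 →
        ∑ b ∈ range D.N, algebraMap K L (Polynomial.eval x1 (T b)) * y1 ^ b = 0 := by
      intro y1 hy1
      have hTh : D.Th (algebraMap K L x1) y1 = 0 := by
        have h1 := D.Th_map (Polynomial.aeval (R := K) y1 |>.comp (AlgHom.id K _)) (Polynomial.C x1) Polynomial.X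
        have h2 : Polynomial.eval y1 G = D.Th (algebraMap K L x1) y1 := by
          have := D.Th_map ((Polynomial.aeval (R := L) y1).restrictScalars K) (Polynomial.C (algebraMap K L x1)) Polynomial.X
          rw [← hG] at this
          simpa using this
        rw [← h2]; exact hy1
      have hcx : constantCoeff (C (algebraMap K L x1) + X : L⟦X⟧) = algebraMap K L x1 := by simp
      obtain ⟨y, hy0, hy⟩ := D.arc_exists (x := (C (algebraMap K L x1) + X : L⟦X⟧)) (by rw [hcx]; exact hx1L) y1
        (by rw [hcx]; exact hTh)
      let α : Arc D := { L := L, x1 := algebraMap K L x1, y := y, h := hy }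
      have h3 := h α rfl
      have h4 : ∑ b ∈ range D.N, Polynomial.aeval α.x (R b) * α.y ^ b =
          X ^ m * ∑ b ∈ range D.N, Polynomial.aeval α.x (T b) * α.y ^ b := by
        rw [mul_sum]
        refine sum_congr rfl fun b hb => ?_
        rw [hT b (mem_range.1 hb), map_mul, map_pow, map_sub, Polynomial.aeval_X, Polynomial.aeval_C]
        have : α.x - algebraMap K α.L⟦X⟧ x1 = X := by
          rw [Arc.x, PowerSeries.algebraMap_apply]
          exact add_sub_cancel_left _ _
        rw [this, mul_assoc]
      rw [h4] at h3
      have h5 := (pow_dvd_pow (X : α.L⟦X⟧) hm).trans h3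
      rw [pow_succ] at h5
      have h6 := (mul_dvd_mul_iff_left (pow_ne_zero m (X_ne_zero))).1 h5
      rw [X_dvd_iff, map_sum] at h6
      rw [← h6]
      refine sum_congr rfl fun b _ => ?_
      rw [map_mul, map_pow, aeval_coe_const]
      have h7 : constantCoeff α.x = algebraMap K α.L x1 := by simp [Arc.x, α]
      have h8 : constantCoeff α.y = y1 := hy0
      rw [h7, h8, Polynomial.aeval_algebraMap_apply]
      simp [α]
    have hcard : G.roots.toFinset.card = D.N := by
      rw [Multiset.toFinset_card_of_nodup (Polynomial.nodup_roots (Th_sep D L _ hx1L)), ← hdeg L]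
      exact (IsAlgClosed.splits G).natDegree_eq_card_roots.symm
    have hpoly : (∑ b ∈ range D.N, Polynomial.C (algebraMap K L (Polynomial.eval x1 (T b))) * Polynomial.X ^ b : Polynomial L) = 0 := by
      by_contra hne
      have hN : 0 < D.N := D.qj_pos _
      have hd : (∑ b ∈ range D.N, Polynomial.C (algebraMap K L (Polynomial.eval x1 (T b))) * Polynomial.X ^ b : Polynomial L).natDegree ≤ D.N - 1 := by
        refine Polynomial.natDegree_sum_le_of_forall_le _ _ fun b hb => ?_
        refine (Polynomial.natDegree_C_mul_X_pow_le _ _).trans ?_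
        have := mem_range.1 hb
        omega
      have := Polynomial.card_le_degree_of_subset_roots (p := (∑ b ∈ range D.N, Polynomial.C (algebraMap K L (Polynomial.eval x1 (T b))) * Polynomial.X ^ b : Polynomial L))
        (Z := G.roots.toFinset) (by
          intro y1 hy1
          have hy1 : y1 ∈ G.roots := by simpa using hy1
          rw [Polynomial.mem_roots hne, Polynomial.IsRoot, Polynomial.eval_finsetSum]
          rw [← hroots y1 (Polynomial.isRoot_of_mem_roots hy1)]
          simp)
      omega
    intro b hb
    have hc := congrArg (fun f => Polynomial.coeff f b) hpoly
    simp only [Polynomial.finsetSum_coeff, Polynomial.coeff_zero, Polynomial.coeff_C_mul_X_pow] at hc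
    rw [sum_ite_eq, if_pos (mem_range.2 hb)] at hc
    have hc : Polynomial.eval x1 (T b) = 0 := by simpa using hc
    rw [hT b hb, pow_succ]
    exact mul_dvd_mul_left _ (Polynomial.dvd_iff_isRoot.2 hc)

theorem zero_lemma (G : Finset K) (R : Polynomial K) (M : ℕ)
    (h : ∀ x1 ∈ G, (Polynomial.X - Polynomial.C x1) ^ M ∣ R) (hd : R.natDegree < M * G.card) : R = 0 := by
  by_contra hne
  have h1 : (∏ x1 ∈ G, (Polynomial.X - Polynomial.C x1) ^ M) ∣ R := by
    refine Finset.prod_dvd_of_coprime ?_ h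
    intro a _ b _ hab
    exact (Polynomial.pairwise_coprime_X_sub_C Function.injective_id hab).pow
  have h2 := Polynomial.natDegree_le_of_dvd h1 hne
  rw [Polynomial.natDegree_prod_of_monic _ _ fun x _ => (Polynomial.monic_X_sub_C x).pow M] at h2
  simp only [Polynomial.natDegree_pow, Polynomial.natDegree_X_sub_C, mul_one, sum_const, smul_eq_mul] at h2
  rw [mul_comm] at h2
  omega

theorem good_card (D : Dat K) [Fintype K] [DecidableEq K] (P : Polynomial K) (hP : P ≠ 0) (hPd : P.natDegree ≤ D.Np) (m0 : K) :
    Fintype.card K ≤ (univ.filter fun x : K => x ≠ 0 ∧ Polynomial.eval x P ≠ 0 ∧ D.lin x ≠ m0 * x ^ D.Q).card + 2 * D.N := by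
  set T : Polynomial K := D.lin Polynomial.X - Polynomial.C m0 * Polynomial.X ^ D.Q with hT
  have hTe : ∀ x, Polynomial.eval x T = D.lin x - m0 * x ^ D.Q := by
    intro x
    have := D.lin_map (Polynomial.aeval x) (Polynomial.X : Polynomial K)
    rw [Polynomial.aeval_X] at this
    simp [hT, ← this]
  have hTd : T.natDegree ≤ D.N := by
    refine (Polynomial.natDegree_sub_le _ _).trans (max_le ?_ ?_)
    · rw [Dat.lin]
      refine Polynomial.natDegree_sum_le_of_forall_le _ _ fun j h => ?_
      exact (Polynomial.natDegree_C_mul_X_pow_le _ _).trans ((D.qj_le h).trans D.F_le)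
    · exact (Polynomial.natDegree_C_mul_X_pow_le _ _).trans D.Q_le
  have hT0 : T ≠ 0 := by
    intro h
    have := congrArg (fun f => Polynomial.coeff f 1) h
    have hQ := D.Q_two
    simp only [hT, Dat.lin, Polynomial.coeff_sub, Polynomial.finsetSum_coeff, Polynomial.coeff_zero] at this
    rw [sum_range_succ', sum_eq_zero, Polynomial.coeff_C_mul_X_pow, if_neg (by omega)] at this
    · simp at this
      exact D.ha0 this
    · intro j _
      rw [Polynomial.algebraMap_apply, Polynomial.coeff_C_mul_X_pow, if_neg]
      have := D.q_two
      have := Nat.one_lt_pow (n := j+1) (by omega) this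
      omega
  have hsub : (univ : Finset K) ⊆ (univ.filter fun x : K => x ≠ 0 ∧ Polynomial.eval x P ≠ 0 ∧ D.lin x ≠ m0 * x ^ D.Q) ∪
      (P.roots.toFinset ∪ T.roots.toFinset) := by
    intro x _
    simp only [mem_union, mem_filter, mem_univ, true_and, Multiset.mem_toFinset, Polynomial.mem_roots hP, Polynomial.mem_roots hT0,
      Polynomial.IsRoot, hTe, sub_eq_zero]
    by_cases hx : x = 0
    · right; right
      rw [hx, D.lin_zero, zero_pow (by have := D.Q_two; omega), mul_zero]
    · tauto
  have h1 := card_le_card hsub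
  have h2 := card_union_le (univ.filter fun x : K => x ≠ 0 ∧ Polynomial.eval x P ≠ 0 ∧ D.lin x ≠ m0 * x ^ D.Q) (P.roots.toFinset ∪ T.roots.toFinset)
  have h3 := card_union_le P.roots.toFinset T.roots.toFinset
  have h4 := (Multiset.toFinset_card_le P.roots).trans (P.card_roots')
  have h5 := (Multiset.toFinset_card_le T.roots).trans (T.card_roots')
  have h6 : D.Np ≤ D.N := Nat.pow_le_pow_right D.q_pos (by omega)
  rw [card_univ] at h1
  omega
end FatP
end

section
set_option linter.unusedSectionVars false
open Finset PowerSeries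
namespace FatP
variable {K : Type} [Field K]

noncomputable def Chat (A : ℕ → ℕ → MvPolynomial (Fin 2) K) (v : ℕ → MvPolynomial (Fin 2) K) (i0 b l : ℕ) :
    MvPolynomial (Fin 2) K := ∑ i ∈ Ico l (i0+1), v i * A b (i - l)

theorem telesc {L : Type} [CommRing L] (ρ : L⟦X⟧) (i : ℕ) :
    ∑ j ∈ range (i+1), (-X) ^ j * hD j (X * ρ) = - ((-X) ^ (i+1) * hD i ρ) := by
  induction i with
  | zero => simp [hD_zero']
  | succ i ih =>
    rw [sum_range_succ, ih, hD_Xmul]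
    ring

theorem telesc2 {L : Type} [CommRing L] (ρ : L⟦X⟧) (i i0 : ℕ) (h : i ≤ i0) :
    X ^ (i0+1) ∣ ∑ l ∈ range (i+1), (-X) ^ (i0 - l) * hD (i - l) (X * ρ) := by
  have h1 : ∑ l ∈ range (i+1), (-X) ^ (i0 - l) * hD (i - l) (X * ρ) =
      (-X) ^ (i0 - i) * ∑ j ∈ range (i+1), (-X) ^ j * hD j (X * ρ) := by
    rw [← sum_range_reflect, mul_sum]
    refine sum_congr rfl fun j hj => ?_
    have := mem_range.1 hj
    rw [← mul_assoc, ← pow_add]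
    congr 2
    · omega
    · congr 1; omega
  rw [h1, telesc]
  refine ⟨- ((-1) ^ (i0+1) * hD i ρ), ?_⟩
  have : (-X : L⟦X⟧) ^ (i0 - i) * (-X) ^ (i+1) = (-1) ^ (i0+1) * X ^ (i0+1) := by
    rw [← pow_add, ← neg_pow]; congr 1; omega
  linear_combination (-hD i ρ) * this

theorem local_vanish (D : Dat K) [Fintype K] (A : ℕ → ℕ → MvPolynomial (Fin 2) K)
    (hA : ∀ b j (α : Arc D), α.x ^ ((D.Q+2)*j) * hD j (D.dl α.x α.y b) = α.ev (A b j))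
    (v : ℕ → MvPolynomial (Fin 2) K) (i0 : ℕ) (hi0 : i0 + 1 ≤ Fintype.card K) (α : Arc D)
    (hx : α.x1 ^ Fintype.card K = α.x1)
    (hy : constantCoeff α.y ^ Fintype.card K ≠ constantCoeff α.y) :
    X ^ (i0+1) ∣ ∑ b ∈ range D.N, ∑ l ∈ range (i0+1), (α.y ^ Fintype.card K) ^ b *
      (α.x ^ Fintype.card K - α.x) ^ (i0 - l) * (α.x ^ ((D.Q+2)*l) * α.ev (Chat A v i0 b l)) := by
  set Qn := Fintype.card K with hQn
  set y1 := constantCoeff α.y with hy1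
  set y' := y1 ^ Qn with hy'
  let Fr := FiniteField.frobeniusAlgHom K α.L⟦X⟧
  have hFr : ∀ z, Fr z = z ^ Qn := fun z => rfl
  have hXQ : (X : α.L⟦X⟧) ^ (i0+1) ∣ X ^ Qn := pow_dvd_pow _ hi0
  -- the constant-coefficient reduction
  have hred : X ^ Qn ∣ α.y ^ Qn - C y' := by
    have h1 : X ∣ α.y - C y1 := by rw [X_dvd_iff]; simp [hy1]
    have h2 := pow_dvd_pow_of_dvd h1 Qn
    have h3 : (α.y - C y1) ^ Qn = α.y ^ Qn - C y' := by
      rw [← hFr, map_sub, hFr, hFr, hy', map_pow]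
    rwa [h3] at h2
  have hxred : α.x ^ Qn - α.x = X ^ Qn - X := by
    have : α.x ^ Qn = C (α.x1 ^ Qn) + X ^ Qn := by
      rw [← hFr, Arc.x, map_add, hFr, hFr, map_pow]
    rw [this, hx, Arc.x]; ring
  set G : α.L⟦X⟧ := ∑ b ∈ range D.N, D.dl α.x α.y b * (C y') ^ b with hG
  have hGX : X ∣ G := by
    have h1 := D.dl_mul α.x α.y (C y' : α.L⟦X⟧)
    have h2 : D.lin α.x * (C y' ^ D.Q - α.y ^ D.Q) - α.x ^ D.Q * (D.lin (C y') - D.lin α.y) =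
        D.Th α.x (C y') - D.Th α.x α.y := by
      rw [Dat.Th, Dat.Th]; ring
    rw [h2, α.hx, sub_zero, ← hG] at h1
    have h3 := congrArg constantCoeff h1
    have hcx : constantCoeff α.x = α.x1 := by simp [Arc.x]
    have h4 : D.Th α.x1 y' = 0 := by
      have h5 := D.Th_map (FiniteField.frobeniusAlgHom K α.L) α.x1 y1
      have h6 : D.Th α.x1 y1 = 0 := by
        have := const_Th D α.x α.y
        rw [α.hx, hcx, map_zero] at this
        exact this.symm
      rw [h6, map_zero] at h5
      have h7 : (FiniteField.frobeniusAlgHom K α.L) α.x1 = α.x1 := hx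
      rw [h7] at h5
      exact h5.symm
    rw [const_Th, hcx, map_mul, map_sub] at h3
    simp only [constantCoeff_C] at h3
    rw [h4] at h3
    rw [X_dvd_iff]
    exact (mul_eq_zero.1 h3).resolve_right (sub_ne_zero.2 hy)
  obtain ⟨ρ, hρ⟩ := hGX
  -- replace
  let I : Ideal α.L⟦X⟧ := Ideal.span {X ^ (i0+1)}
  let π := Ideal.Quotient.mk I
  have hπ : ∀ z, π z = 0 ↔ X ^ (i0+1) ∣ z := fun z => by
    rw [Ideal.Quotient.eq_zero_iff_mem, Ideal.mem_span_singleton]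
  have hπy : π (α.y ^ Qn) = π (C y') := by
    rw [← sub_eq_zero, ← map_sub, hπ]; exact hXQ.trans hred
  have hπx : π (α.x ^ Qn - α.x) = π (-X) := by
    rw [hxred, ← sub_eq_zero, ← map_sub, hπ]
    convert hXQ using 1; ring
  have hterm : ∀ b l, α.x ^ ((D.Q+2)*l) * α.ev (Chat A v i0 b l) =
      ∑ i ∈ Ico l (i0+1), α.x ^ ((D.Q+2)*i) * α.ev (v i) * hD (i-l) (D.dl α.x α.y b) := by
    intro b l
    rw [Chat, map_sum, mul_sum]
    refine sum_congr rfl fun i hi => ?_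
    have := (mem_Ico.1 hi).1
    have e : (D.Q+2)*i = (D.Q+2)*l + (D.Q+2)*(i-l) := by rw [← mul_add]; congr 1; omega
    rw [map_mul, ← hA, e, pow_add]; ring
  rw [← hπ]
  have : π (∑ b ∈ range D.N, ∑ l ∈ range (i0+1), (α.y ^ Qn) ^ b *
      (α.x ^ Qn - α.x) ^ (i0 - l) * (α.x ^ ((D.Q+2)*l) * α.ev (Chat A v i0 b l))) =
      π (∑ b ∈ range D.N, ∑ l ∈ range (i0+1), (C y') ^ b *
      (-X) ^ (i0 - l) * (α.x ^ ((D.Q+2)*l) * α.ev (Chat A v i0 b l))) := by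
    simp only [map_sum, map_mul π, map_pow π, hπx]
    simp only [← map_pow π, hπy]
  rw [this, hπ]
  have h1 : ∑ b ∈ range D.N, ∑ l ∈ range (i0+1), (C y') ^ b *
      (-X) ^ (i0 - l) * (α.x ^ ((D.Q+2)*l) * α.ev (Chat A v i0 b l)) =
      ∑ i ∈ range (i0+1), α.x ^ ((D.Q+2)*i) * α.ev (v i) *
        ∑ l ∈ range (i+1), (-X) ^ (i0 - l) * hD (i-l) (X * ρ) := by
    rw [← hρ, hG]
    simp only [hterm, hD_sum]
    have e1 : ∀ j b, hD j (D.dl α.x α.y b * C y' ^ b) = C y' ^ b * hD j (D.dl α.x α.y b) := by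
      intro j b
      rw [mul_comm, ← map_pow, hD_Cmul]
    simp only [e1, mul_sum]
    rw [sum_comm]
    have e2 : ∀ g : ℕ → ℕ → α.L⟦X⟧, ∑ l ∈ range (i0+1), ∑ i ∈ Ico l (i0+1), g l i =
        ∑ i ∈ range (i0+1), ∑ l ∈ range (i+1), g l i := by
      intro g
      refine Finset.sum_comm' ?_
      intro l i
      simp only [mem_range, mem_Ico]
      omega
    rw [sum_congr rfl fun l _ => sum_comm, e2]
    refine sum_congr rfl fun i _ => sum_congr rfl fun l _ => sum_congr rfl fun b _ => ?_
    ring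
  rw [h1]
  exact dvd_sum fun i hi => dvd_mul_of_dvd_right (telesc2 ρ i i0 (by have := mem_range.1 hi; omega)) _

theorem L_phi [Fintype K] {ι : Type} (s : Finset ι) (V : Submodule K K⟦X⟧)
    (hV : ∀ u ∈ V, X ^ Fintype.card K ∣ u → u = 0) (Cf : ι → K⟦X⟧) (hC : ∀ j ∈ s, Cf j ∈ V) (w : ι → K⟦X⟧)
    (h : ∑ j ∈ s, Cf j * w j ^ Fintype.card K = 0) : ∑ j ∈ s, Cf j * w j = 0 := by
  have key : ∀ n (w : ι → K⟦X⟧), ∑ j ∈ s, Cf j * w j ^ Fintype.card K = 0 →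
      X ^ n ∣ ∑ j ∈ s, Cf j * w j := by
    intro n
    induction n with
    | zero => intro w _; simp
    | succ n ih =>
      intro w hw
      have : ∀ j, ∃ w', w j = C (constantCoeff (w j)) + X * w' := by
        intro j
        have h1 : X ∣ w j - C (constantCoeff (w j)) := by rw [X_dvd_iff]; simp
        obtain ⟨w', h'⟩ := h1
        exact ⟨w', by rw [← h']; ring⟩
      choose w' hw' using this
      let Fr := FiniteField.frobeniusAlgHom K K⟦X⟧
      have hFr : ∀ z, Fr z = z ^ Fintype.card K := fun z => rfl
      have hpow : ∀ j, w j ^ Fintype.card K = C (constantCoeff (w j)) + X ^ Fintype.card K * w' j ^ Fintype.card K := by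
        intro j
        conv_lhs => rw [hw' j]
        rw [← hFr, map_add, map_mul, hFr, hFr, hFr, ← map_pow, FiniteField.pow_card]
      set u := ∑ j ∈ s, Cf j * C (constantCoeff (w j)) with hu
      have huV : u ∈ V := by
        refine V.sum_mem fun j hj => ?_
        rw [mul_comm, ← smul_eq_C_mul]
        exact V.smul_mem _ (hC j hj)
      have e1 : u + X ^ Fintype.card K * ∑ j ∈ s, Cf j * w' j ^ Fintype.card K = 0 := by
        rw [← hw, hu, mul_sum, ← sum_add_distrib]
        refine sum_congr rfl fun j _ => ?_
        rw [hpow]; ring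
      have hu0 : u = 0 := hV u huV ⟨-∑ j ∈ s, Cf j * w' j ^ Fintype.card K, by linear_combination e1⟩
      rw [hu0, zero_add] at e1
      have e2 := (mul_eq_zero.1 e1).resolve_left (pow_ne_zero _ X_ne_zero)
      have e3 := ih w' e2
      have e4 : ∑ j ∈ s, Cf j * w j = X * ∑ j ∈ s, Cf j * w' j := by
        have : ∑ j ∈ s, Cf j * w j = u + X * ∑ j ∈ s, Cf j * w' j := by
          rw [hu, mul_sum, ← sum_add_distrib]
          refine sum_congr rfl fun j _ => ?_
          conv_lhs => rw [hw' j]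
          ring
        rw [this, hu0, zero_add]
      rw [e4, pow_succ']
      exact mul_dvd_mul_left _ e3
  ext n
  have := X_pow_dvd_iff.1 (key (n+1) w h) n (by omega)
  simpa using this
end FatP
end

section
set_option linter.unusedSectionVars false
open Finset PowerSeries
namespace FatP
variable {K : Type} [Field K]

theorem nonvanish (D : Dat K) [Fintype K] (A : ℕ → ℕ → MvPolynomial (Fin 2) K)
    (v : ℕ → MvPolynomial (Fin 2) K) (i0 W0 : ℕ) (x0 : K) (y : K⟦X⟧)
    (ev : MvPolynomial (Fin 2) K →ₐ[K] K⟦X⟧) (hev0 : ev (MvPolynomial.X 0) = C x0 + X)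
    (hA : ∀ b, D.dl (C x0 + X) y b = ev (A b 0))
    (hdeg : ∀ b < D.N, ∀ l < i0 + 1, (Chat A v i0 b l).totalDegree + (D.Q+2)*l ≤ W0)
    (hV : ∀ u ∈ Vd ev (W0 + i0), X ^ Fintype.card K ∣ u → u = 0)
    (hv : ev (v i0) ≠ 0)
    (hF : ∑ b ∈ range D.N, ∑ l ∈ range (i0+1), (y ^ Fintype.card K) ^ b *
      ((C x0 + X) ^ Fintype.card K - (C x0 + X)) ^ (i0 - l) *
        ((C x0 + X) ^ ((D.Q+2)*l) * ev (Chat A v i0 b l)) = 0) : False := by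
  set x : K⟦X⟧ := C x0 + X with hx
  have hxne : x ≠ 0 := by
    intro h
    have := congrArg (coeff 1) h
    simp [hx, coeff_one_X] at this
  have hexp : ∀ (d : ℕ) (x2 : K⟦X⟧), d < i0 + 1 → (x2 - x) ^ d =
      ∑ m ∈ range (i0+1), x2 ^ m * ((-x) ^ (d - m) * (d.choose m : K⟦X⟧)) := by
    intro d x2 hd
    rw [sub_eq_add_neg, add_pow]
    rw [← sum_subset (range_subset_range.2 (by omega : d + 1 ≤ i0 + 1))]
    · exact sum_congr rfl fun _ _ => by ring
    · intro m _ hm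
      rw [mem_range] at hm
      rw [Nat.choose_eq_zero_of_lt (by omega)]; simp
  let s : Finset (ℕ × ℕ × ℕ) := range D.N ×ˢ range (i0+1) ×ˢ range (i0+1)
  let Cf : ℕ × ℕ × ℕ → K⟦X⟧ := fun j => ((-x) ^ (i0 - j.2.1 - j.2.2) * ((i0 - j.2.1).choose j.2.2 : K⟦X⟧)) *
    (x ^ ((D.Q+2)*j.2.1) * ev (Chat A v i0 j.1 j.2.1))
  let w : ℕ × ℕ × ℕ → K⟦X⟧ := fun j => x ^ j.2.2 * y ^ j.1
  have hsum : ∀ x2 y2 : K⟦X⟧, ∑ b ∈ range D.N, ∑ l ∈ range (i0+1), y2 ^ b * (x2 - x) ^ (i0 - l) *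
        (x ^ ((D.Q+2)*l) * ev (Chat A v i0 b l)) = ∑ j ∈ s, Cf j * (x2 ^ j.2.2 * y2 ^ j.1) := by
    intro x2 y2
    simp only [s, sum_product]
    refine sum_congr rfl fun b _ => sum_congr rfl fun l hl => ?_
    have := mem_range.1 hl
    rw [hexp _ _ (by omega), mul_sum, sum_mul]
    refine sum_congr rfl fun m _ => ?_
    simp only [Cf]
    ring
  rw [hsum] at hF
  have hz : ∑ j ∈ s, Cf j * w j = 0 := by
    refine L_phi s (Vd ev (W0 + i0)) hV Cf ?_ w ?_
    · rintro ⟨b, l, m⟩ hj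
      simp only [s, mem_product, mem_range] at hj
      obtain ⟨hb, hl, hm⟩ := hj
      rw [mem_Vd]
      refine ⟨((-MvPolynomial.X 0) ^ (i0 - l - m) * MvPolynomial.C (((i0 - l).choose m : ℕ) : K)) *
        (MvPolynomial.X 0 ^ ((D.Q+2)*l) * Chat A v i0 b l), ?_, ?_⟩
      · refine (MvPolynomial.totalDegree_mul _ _).trans ?_
        have h1 : ((-MvPolynomial.X 0) ^ (i0 - l - m) * MvPolynomial.C (((i0 - l).choose m : ℕ) : K) : MvPolynomial (Fin 2) K).totalDegree ≤ i0 := by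
          refine (MvPolynomial.totalDegree_mul _ _).trans ?_
          rw [MvPolynomial.totalDegree_C]
          refine (Nat.add_le_add_right (MvPolynomial.totalDegree_pow _ _) 0).trans ?_
          rw [MvPolynomial.totalDegree_neg, MvPolynomial.totalDegree_X]
          omega
        have h2 := MvPolynomial.totalDegree_mul (MvPolynomial.X 0 ^ ((D.Q+2)*l)) (Chat A v i0 b l)
        rw [MvPolynomial.totalDegree_X_pow] at h2
        have := hdeg b hb l hl
        omega
      · simp only [map_mul, map_pow, map_neg, hev0, map_natCast, Cf]
    · rw [← hF]
      refine sum_congr rfl fun j _ => ?_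
      simp only [w]
      congr 1
      rw [mul_pow, ← pow_mul, ← pow_mul, ← pow_mul, ← pow_mul, mul_comm j.2.2, mul_comm j.1]
  simp only [w] at hz
  rw [← hsum] at hz
  have hd := D.dl_diag x y
  have h2 : ∑ b ∈ range D.N, ∑ l ∈ range (i0+1), y ^ b * (x - x) ^ (i0 - l) *
        (x ^ ((D.Q+2)*l) * ev (Chat A v i0 b l)) = x ^ ((D.Q+2)*i0) * ev (v i0) * (∑ b ∈ range D.N, D.dl x y b * y ^ b) := by
    rw [mul_sum]
    refine sum_congr rfl fun b _ => ?_
    rw [sum_range_succ, sum_eq_zero]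
    · rw [Chat, Nat.Ico_succ_singleton, sum_singleton, Nat.sub_self, map_mul, ← hA]
      simp only [pow_zero]
      ring
    · intro l hl
      have := mem_range.1 hl
      rw [sub_self, zero_pow (by omega)]; ring
  rw [h2, hd] at hz
  refine mul_ne_zero (mul_ne_zero (pow_ne_zero _ hxne) hv) (neg_ne_zero.2 (mul_ne_zero ?_ (pow_ne_zero _ hxne))) hz
  simpa using D.ha0

theorem aeval_ne (x0 : K) (P : Polynomial K) (hP : P ≠ 0) : Polynomial.aeval (C x0 + X : K⟦X⟧) P ≠ 0 := by
  have h1 : Polynomial.aeval (C x0 + X : K⟦X⟧) P = ((Polynomial.taylor x0 P : Polynomial K) : K⟦X⟧) := by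
    rw [Polynomial.taylor_apply]
    induction P using Polynomial.induction_on' with
    | add p q hp hq =>
      by_cases h1 : p = 0
      · by_cases h2 : q = 0
        · simp [h1, h2]
        · rw [h1]; simp [hq h2]
      · by_cases h2 : q = 0
        · simp [h2, hp h1]
        · simp [hp h1, hq h2]
    | monomial n a =>
      rw [Polynomial.aeval_monomial, Polynomial.monomial_comp, PowerSeries.algebraMap_apply]
      simp [add_comm]
  rw [h1]
  intro h
  have h2 : Polynomial.taylor x0 P = 0 := by
    apply Polynomial.coe_injective
    simpa using h
  exact hP ((Polynomial.taylor_eq_zero _ _).1 h2)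
end FatP
end

section
set_option linter.unusedSectionVars false
open Finset PowerSeries
namespace FatP
variable {K : Type} [Field K]

theorem mem_range_of_pow_card [Fintype K] {L : Type} [Field L] [Algebra K L] (z : L)
    (hz : z ^ Fintype.card K = z) : ∃ c : K, algebraMap K L c = z := by
  classical
  by_contra hne
  push Not at hne
  have hp : (Polynomial.X ^ Fintype.card K - Polynomial.X : Polynomial L) ≠ 0 :=
    FiniteField.X_pow_card_sub_X_ne_zero L Fintype.one_lt_card
  have h1 := Polynomial.card_le_degree_of_subset_roots (p := (Polynomial.X ^ Fintype.card K - Polynomial.X : Polynomial L))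
    (Z := insert z (univ.image (algebraMap K L))) (by
      intro w hw
      rw [Polynomial.mem_roots hp]
      have hw : w ∈ insert z (univ.image (algebraMap K L)) := by simpa using hw
      rw [mem_insert, mem_image] at hw
      rcases hw with rfl | ⟨c, _, rfl⟩
      · simp [hz]
      · simp [← map_pow, FiniteField.pow_card])
  rw [FiniteField.X_pow_card_sub_X_natDegree_eq L Fintype.one_lt_card, card_insert_of_notMem, card_image_of_injective _ (algebraMap K L).injective, card_univ] at h1
  · omega
  · simp [hne]

theorem red_poly (D : Dat K) (P : Polynomial K) (r : ℕ)
    (hP : ∀ i e, e + 1 + r * D.Np ≤ D.N + r * D.N →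
      Red D P r (i + e + r * D.Np) (fun α => α.x ^ i * α.y ^ e))
    (H : MvPolynomial (Fin 2) K) (T Y : ℕ) (hT : H.totalDegree ≤ T) (hY : H.degreeOf 1 ≤ Y)
    (hr : Y + 1 + r * D.Np ≤ D.N + r * D.N) : Red D P r (T + r * D.Np) (fun α => α.ev H) := by
  have h1 : Red D P r (T + r * D.Np) (fun α => ∑ m ∈ H.support, algebraMap K α.L⟦X⟧ (H.coeff m) * (α.x ^ m 0 * α.y ^ m 1)) := by
    refine Red.sum _ _ fun m hm => Red.cmul _ ((hP _ _ ?_).mono ?_)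
    · have := (MvPolynomial.monomial_le_degreeOf 1 hm).trans hY
      omega
    · have := (MvPolynomial.le_totalDegree hm).trans hT
      rw [Finsupp.sum_fintype _ _ (fun _ => rfl), Fin.sum_univ_two] at this
      omega
  refine h1.congr fun α => ?_
  rw [Arc.ev, MvPolynomial.aeval_def, MvPolynomial.eval₂_eq']
  refine sum_congr rfl fun m _ => ?_
  rw [Fin.prod_univ_two]
  simp

theorem main_lemma (D : Dat K) [Fintype K] (n : ℕ) (hcard : Fintype.card K = D.q ^ n)
    (hmn : max D.k D.t ≤ n) (ν β S : ℕ) (hβ : β + D.N = D.N * D.N + 2 * D.N * ν)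
    (hS : S = β * (D.N+2) + 2 * (D.F + D.Q)) (hν : D.N ≤ (D.q - 1) * ν + 1)
    (hn1 : (D.F + D.Q) * (S + β + D.F + D.Q) < Fintype.card K)
    (hn2 : (S + 2 * (D.F + D.Q)) * (D.Np + 1) + β * (2 * D.N) < Fintype.card K)
    (m0 x0 y0 : K) (hx0 : x0 ≠ 0) (hx0k : D.lin x0 = m0 * x0 ^ D.Q) (hy0k : D.lin y0 = m0 * y0 ^ D.Q)
    (hind : ∀ c : K, c ^ D.q = c → y0 ≠ c * x0)
    (hother : ∀ x1 y1 : K, x1 ≠ 0 → D.Th x1 y1 = 0 → D.lin x1 ≠ m0 * x1 ^ D.Q →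
      ∃ c : K, c ^ D.q = c ∧ y1 = c * x1) : False := by
  classical
  set Qn := Fintype.card K with hQn
  have hTh0 : D.Th x0 y0 = 0 := by rw [Dat.Th, hx0k, hy0k]; ring
  have hcx : constantCoeff (C x0 + X : K⟦X⟧) = x0 := by simp
  obtain ⟨y, hy0, hy⟩ := D.arc_exists (x := (C x0 + X : K⟦X⟧)) (by rw [hcx]; exact hx0) y0 (by rw [hcx]; exact hTh0)
  let ev : MvPolynomial (Fin 2) K →ₐ[K] K⟦X⟧ := MvPolynomial.aeval ![C x0 + X, y]
  obtain ⟨e, ε, hep, hTe, hee, hεe, hed, hεd, hεc⟩ := component D x0 y0 y hy hy0 hind ev rfl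
  have hev0 : ev (MvPolynomial.X 0) = C x0 + X := by simp [ev]
  obtain ⟨A, hAd, hAe⟩ := exists_A D
  obtain ⟨i0, v, hi0, hvd, hv0, hvz⟩ := siegel D ev x0 hev0 e hep hee hed A hAd ν β S hβ hS
  obtain ⟨P, hP0, hPd, hPr, hPN⟩ := exists_P1 D
  let α0 : Arc D := { L := K, x1 := x0, y := y, h := hy }
  have hα0 : α0.ev = ev := rfl
  have hcd : D.Q + 2 ≤ D.N + 2 := by have := D.Q_le; omega
  have hFQ2 : 2 ≤ D.F + D.Q := by have := D.Q_two; omega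
  have hChd : ∀ b, ∀ l < i0 + 1, (Chat A v i0 b l).totalDegree + (D.Q+2)*l ≤ S + D.F + D.Q - 1 := by
    intro b l hl
    have h1 : (Chat A v i0 b l).totalDegree ≤ S + D.F + D.Q - 1 - l * (D.N+2) := by
      refine MvPolynomial.totalDegree_finsetSum_le fun i hi => ?_
      obtain ⟨h2, h3⟩ := mem_Ico.1 hi
      refine (MvPolynomial.totalDegree_mul _ _).trans ?_
      have h4 := hvd i (by omega)
      have h5 := hAd b (i - l)
      have h6 : i * (D.N+2) ≤ β * (D.N+2) := Nat.mul_le_mul_right _ (by omega)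
      have h7 : i * (D.N+2) = l * (D.N+2) + (i - l) * (D.N+2) := by rw [← add_mul]; congr 1; omega
      omega
    have h8 : (D.Q+2)*l ≤ l * (D.N+2) := by rw [mul_comm]; exact Nat.mul_le_mul_left _ hcd
    have h6 : l * (D.N+2) ≤ β * (D.N+2) := Nat.mul_le_mul_right _ (by omega)
    omega
  let g : (α : Arc D) → ℕ → ℕ → α.L⟦X⟧ := fun α b l => (α.y ^ Qn) ^ b *
      (α.x ^ Qn - α.x) ^ (i0 - l) * (α.x ^ ((D.Q+2)*l) * α.ev (Chat A v i0 b l))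
  -- full sum equals truncated sum when e vanishes
  have htrunc : ∀ α : Arc D, α.ev e = 0 → ∑ b ∈ range D.N, ∑ l ∈ range (i0+1), g α b l =
      ∑ b ∈ range D.N, ∑ l ∈ Ico (b+ν) (i0+1), g α b l := by
    intro α hα
    refine sum_congr rfl fun b hb => ?_
    symm
    refine sum_subset ?_ ?_
    · intro l hl
      rw [mem_Ico] at hl
      exact mem_range.2 hl.2
    · intro l hl hl2
      have hl3 := mem_range.1 hl
      rw [mem_Ico] at hl2
      have h0 : ev (Chat A v i0 b l) = 0 := hvz b (mem_range.1 hb) l (by omega)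
      obtain ⟨w, hw⟩ := dvd_of_ev ev x0 hev0 e hep hee h0
      have : α.ev (Chat A v i0 b l) = 0 := by rw [hw, map_mul, hα, zero_mul]
      simp only [g, this, mul_zero]
  let θ : (α : Arc D) → α.L⟦X⟧ := fun α => ∑ b ∈ range D.N, ∑ l ∈ Ico (b+ν) (i0+1), α.ev ε * g α b l
  have hθ : ∀ α, θ α = α.ev ε * ∑ b ∈ range D.N, ∑ l ∈ Ico (b+ν) (i0+1), g α b l := by
    intro α
    simp only [θ, mul_sum]
  -- reduction
  have hNp : D.Np ∣ Qn := by
    rw [hcard, Dat.Np]; exact pow_dvd_pow _ (by omega)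
  obtain ⟨Q', hQ'⟩ := hNp
  set W' := S + 2 * (D.F + D.Q) with hW'
  set r := ν * Q' + W' with hr
  have hNpos : 0 < D.N := D.qj_pos _
  have hNppos : 0 < D.Np := D.qj_pos _
  have hq2 := D.q_two
  have hrN : (D.N - 1) * Qn + W' + 1 + r * D.Np ≤ D.N + r * D.N := by
    have e1 : r * D.N = r * D.Np + r * ((D.q - 1) * D.Np) := by
      rw [D.N_eq]
      obtain ⟨z, hz⟩ : ∃ z, D.q = z + 1 := ⟨D.q - 1, by omega⟩
      rw [hz]; simp; ring
    have e2 : r * ((D.q - 1) * D.Np) = (D.q - 1) * ν * Qn + W' * ((D.q-1) * D.Np) := by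
      rw [hr, hQ']; ring
    have e3 : (D.N - 1) * Qn ≤ (D.q - 1) * ν * Qn := Nat.mul_le_mul_right _ (by omega)
    have e4 : W' * 1 ≤ W' * ((D.q-1) * D.Np) := Nat.mul_le_mul_left _ (Nat.mul_pos (by omega) hNppos)
    omega
  have hred : Red D P r (Qn * i0 + W' * (D.Np + 1)) θ := by
    refine Red.sum _ _ fun b hb => Red.sum _ _ fun l hl => ?_
    have hb := mem_range.1 hb
    obtain ⟨hl1, hl2⟩ := mem_Ico.1 hl
    have hmon := red_mon D P hPd hPr r
    let H : MvPolynomial (Fin 2) K := ε * ((MvPolynomial.X 1 ^ Qn) ^ b *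
      (MvPolynomial.X 0 ^ Qn - MvPolynomial.X 0) ^ (i0 - l) * (MvPolynomial.X 0 ^ ((D.Q+2)*l) * Chat A v i0 b l))
    have hH : Red D P r (Qn * (b + (i0 - l)) + W' + r * D.Np) (fun α => α.ev H) := by
      have hch := hChd b l (by omega)
      refine red_poly D P r hmon H _ ((D.N - 1) * Qn + W') ?_ ?_ hrN
      · have a1 := MvPolynomial.totalDegree_mul ε ((MvPolynomial.X 1 ^ Qn) ^ b *
          (MvPolynomial.X 0 ^ Qn - MvPolynomial.X 0) ^ (i0 - l) * (MvPolynomial.X 0 ^ ((D.Q+2)*l) * Chat A v i0 b l))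
        have a2 := MvPolynomial.totalDegree_mul ((MvPolynomial.X 1 ^ Qn) ^ b *
          (MvPolynomial.X 0 ^ Qn - MvPolynomial.X 0) ^ (i0 - l)) (MvPolynomial.X 0 ^ ((D.Q+2)*l) * Chat A v i0 b l)
        have a3 := MvPolynomial.totalDegree_mul ((MvPolynomial.X 1 ^ Qn) ^ b)
          ((MvPolynomial.X 0 ^ Qn - MvPolynomial.X 0 : MvPolynomial (Fin 2) K) ^ (i0 - l))
        have a4 := MvPolynomial.totalDegree_mul (MvPolynomial.X 0 ^ ((D.Q+2)*l)) (Chat A v i0 b l)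
        have a5 := MvPolynomial.totalDegree_pow (MvPolynomial.X 0 ^ Qn - MvPolynomial.X 0 : MvPolynomial (Fin 2) K) (i0 - l)
        have a6 : (MvPolynomial.X 0 ^ Qn - MvPolynomial.X 0 : MvPolynomial (Fin 2) K).totalDegree ≤ Qn := by
          refine (MvPolynomial.totalDegree_sub _ _).trans (max_le ?_ ?_)
          · rw [MvPolynomial.totalDegree_X_pow]
          · rw [MvPolynomial.totalDegree_X]; exact Fintype.card_pos
        have a7 := Nat.mul_le_mul_left (i0 - l) a6
        rw [← pow_mul, MvPolynomial.totalDegree_X_pow] at a3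
        rw [MvPolynomial.totalDegree_X_pow] at a4
        rw [← pow_mul] at a1 a2
        simp only [H]
        rw [← pow_mul]
        have a8 : Qn * (b + (i0 - l)) = Qn * b + (i0 - l) * Qn := by ring
        omega
      · have a1 := MvPolynomial.degreeOf_mul_le 1 ε ((MvPolynomial.X 1 ^ Qn) ^ b *
          (MvPolynomial.X 0 ^ Qn - MvPolynomial.X 0) ^ (i0 - l) * (MvPolynomial.X 0 ^ ((D.Q+2)*l) * Chat A v i0 b l))
        have a2 := MvPolynomial.degreeOf_mul_le 1 ((MvPolynomial.X 1 ^ Qn) ^ b *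
          (MvPolynomial.X 0 ^ Qn - MvPolynomial.X 0) ^ (i0 - l)) (MvPolynomial.X 0 ^ ((D.Q+2)*l) * Chat A v i0 b l)
        have a3 := MvPolynomial.degreeOf_mul_le 1 ((MvPolynomial.X 1 ^ Qn) ^ b)
          ((MvPolynomial.X 0 ^ Qn - MvPolynomial.X 0 : MvPolynomial (Fin 2) K) ^ (i0 - l))
        have a4 := MvPolynomial.degreeOf_mul_le 1 (MvPolynomial.X 0 ^ ((D.Q+2)*l)) (Chat A v i0 b l)
        have a5 := MvPolynomial.degreeOf_pow_le 1 (MvPolynomial.X 0 ^ Qn - MvPolynomial.X 0 : MvPolynomial (Fin 2) K) (i0 - l)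
        have a6 : (MvPolynomial.X 0 ^ Qn - MvPolynomial.X 0 : MvPolynomial (Fin 2) K).degreeOf 1 ≤ 0 := by
          refine (MvPolynomial.degreeOf_sub_le _ _ _).trans (max_le ?_ ?_)
          · rw [MvPolynomial.degreeOf_X_pow_of_ne _ (by decide)]
          · rw [MvPolynomial.degreeOf_X_of_ne (by decide)]
        have a7 := Nat.mul_le_mul_left (i0 - l) a6
        rw [← pow_mul, MvPolynomial.degreeOf_X_self_pow] at a3
        rw [MvPolynomial.degreeOf_X_pow_of_ne _ (by decide)] at a4
        have a9 := MvPolynomial.degreeOf_le_totalDegree (Chat A v i0 b l) 1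
        have a10 := MvPolynomial.degreeOf_le_totalDegree ε 1
        rw [← pow_mul] at a1 a2
        simp only [H]
        rw [← pow_mul]
        have a8 : Qn * b ≤ (D.N - 1) * Qn := by rw [mul_comm]; exact Nat.mul_le_mul_right _ (by omega)
        omega
    refine (hH.congr fun α => ?_).mono ?_
    · simp only [H, g, map_mul, map_pow, map_sub, α.ev_X0, α.ev_X1]
    · have e1 : r * D.Np = ν * Qn + W' * D.Np := by rw [hr, hQ']; ring
      have e2 : Qn * (b + (i0 - l)) + ν * Qn ≤ Qn * i0 := by
        rw [mul_comm ν, ← mul_add]; exact Nat.mul_le_mul_left _ (by omega)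
      rw [e1, mul_add W']
      omega
  obtain ⟨R, hRd, hR⟩ := hred
  -- zeros
  set G := univ.filter fun x : K => x ≠ 0 ∧ Polynomial.eval x P ≠ 0 ∧ D.lin x ≠ m0 * x ^ D.Q with hG
  have hGc := good_card D P hP0 hPd m0
  rw [← hG, ← hQn] at hGc
  have hiQ : i0 + 1 ≤ Qn := by
    have : β * 1 ≤ β * (2 * D.N) := Nat.mul_le_mul_left _ (by omega)
    omega
  have hdiv : ∀ x1 ∈ G, ∀ b < D.N, (Polynomial.X - Polynomial.C x1) ^ (i0+1) ∣ R b := by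
    intro x1 hx1
    obtain ⟨hx1a, hx1b, hx1c⟩ := (mem_filter.1 hx1).2
    refine zero_local D x1 hx1a (hPN x1 hx1b) R (i0+1) ?_ (i0+1) le_rfl
    intro α hα
    rw [← hR]
    refine dvd_mul_of_dvd_right ?_ _
    have hcα : constantCoeff α.x = algebraMap K α.L x1 := by simp [Arc.x, hα]
    by_cases hyq : constantCoeff α.y ^ Qn = constantCoeff α.y
    · obtain ⟨y1, hy1⟩ := mem_range_of_pow_card _ hyq
      have h1 : D.Th x1 y1 = 0 := by
        have h2 := const_Th D α.x α.y
        rw [α.hx, map_zero, hcα, ← hy1] at h2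
        have h3 := D.Th_map (Algebra.ofId K α.L) x1 y1
        change algebraMap K α.L _ = D.Th (algebraMap K α.L x1) (algebraMap K α.L y1) at h3
        rw [← h2] at h3
        exact (algebraMap K α.L).injective (by rw [h3, map_zero])
      obtain ⟨c, hc, hyc⟩ := hother x1 y1 hx1a h1 hx1c
      have hcc : (algebraMap K α.L⟦X⟧ c) ^ D.q = algebraMap K α.L⟦X⟧ c := by rw [← map_pow, hc]
      have h4 : α.y - algebraMap K α.L⟦X⟧ c * α.x = 0 := by
        refine D.arc_unique (x := α.x) ?_ ?_ ?_
        · rw [hcα]; simpa using hx1a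
        · rw [map_sub, map_mul, hcα, ← hy1, hyc, PowerSeries.algebraMap_apply]
          simp
        · rw [D.Th_sub, α.hx, D.Th_fix hcc, sub_zero]
      have h5 := hεc c hc α (sub_eq_zero.1 h4)
      rw [hθ, h5, zero_mul]
      exact dvd_zero _
    · by_cases hε : α.ev ε = 0
      · rw [hθ, hε, zero_mul]
        exact dvd_zero _
      · have h1 : α.ev e = 0 := by
          have h2 := congrArg α.ev hTe
          rw [D.Th_map, α.ev_X0, α.ev_X1, α.hx, map_mul] at h2
          exact (mul_eq_zero.1 h2.symm).resolve_right hε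
        rw [hθ, ← htrunc α h1]
        refine dvd_mul_of_dvd_right ?_ _
        refine local_vanish D A hAe v i0 hiQ α ?_ hyq
        rw [hα, ← map_pow, FiniteField.pow_card]
  have hR0 : ∀ b < D.N, R b = 0 := by
    intro b hb
    refine zero_lemma G (R b) (i0+1) (fun x1 hx1 => hdiv x1 hx1 b hb) ?_
    refine lt_of_le_of_lt (hRd b) ?_
    have h1 : (i0+1) * Qn ≤ (i0+1) * (G.card + 2 * D.N) := Nat.mul_le_mul_left _ hGc
    rw [mul_add, add_mul, one_mul, mul_comm i0 Qn] at h1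
    have h2 : (i0+1) * (2 * D.N) ≤ β * (2 * D.N) := Nat.mul_le_mul_right _ (by omega)
    omega
  have hθ0 : θ α0 = 0 := by
    have h1 := hR α0
    rw [sum_eq_zero (fun b hb => by rw [hR0 b (mem_range.1 hb), map_zero, zero_mul])] at h1
    refine (mul_eq_zero.1 h1).resolve_left (pow_ne_zero _ ?_)
    exact aeval_ne x0 P hP0
  rw [hθ, ← htrunc α0 hee] at hθ0
  have hF := (mul_eq_zero.1 hθ0).resolve_left hεe
  refine nonvanish D A v i0 (S + D.F + D.Q - 1) x0 y ev hev0 ?_ (fun b _ l hl => hChd b l hl) ?_ hv0 hF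
  · intro b
    have := hAe b 0 α0
    rw [mul_zero, pow_zero, one_mul, hD_zero'] at this
    exact this
  · intro u hu hX
    by_contra hu0
    have h1 := bezout ev x0 hev0 e hep hee _ _ hu hu0 hX
    have h2 : e.totalDegree * (S + D.F + D.Q - 1 + i0) ≤ (D.F + D.Q) * (S + β + D.F + D.Q) :=
      Nat.mul_le_mul hed (by omega)
    omega
end FatP
end

section
set_option linter.unusedSectionVars false
open Finset PowerSeries
namespace FatP
variable {K : Type} [Field K]

theorem num_core (N u s β B S Qn a : ℕ) (hβ : β ≤ B) (hs : s ≤ a) (hS : S = β * (N+2) + 2 * s)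
    (h1 : a * (B * (N+2) + B + 3 * a) < Qn)
    (h2 : (B * (N+2) + 4 * a) * (u+1) + B * (2*N) < Qn) :
    s * (S + β + s) < Qn ∧ (S + 2 * s) * (u + 1) + β * (2 * N) < Qn := by
  have hb : β * (N+2) ≤ B * (N+2) := Nat.mul_le_mul_right _ hβ
  constructor
  · refine lt_of_le_of_lt (Nat.mul_le_mul hs ?_) h1
    omega
  · refine lt_of_le_of_lt (Nat.add_le_add (Nat.mul_le_mul_right _ ?_) (Nat.mul_le_mul_right _ hβ)) h2
    omega

theorem numerics (D : Dat K) (n : ℕ)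
    (hn : (4 ≤ D.q ∧ 4 * max D.k D.t + 1 ≤ n) ∨ (D.q = 3 ∧ 4 * max D.k D.t + 2 ≤ n) ∨
      (D.q = 2 ∧ 4 * max D.k D.t + 4 ≤ n)) :
    ∃ ν β S, β + D.N = D.N * D.N + 2 * D.N * ν ∧ S = β * (D.N+2) + 2 * (D.F + D.Q) ∧
      D.N ≤ (D.q - 1) * ν + 1 ∧ (D.F + D.Q) * (S + β + D.F + D.Q) < D.q ^ n ∧
      (S + 2 * (D.F + D.Q)) * (D.Np + 1) + β * (2 * D.N) < D.q ^ n := by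
  have hNpos : 0 < D.N := D.qj_pos _
  obtain ⟨ν, hν⟩ : D.q - 1 ∣ D.N - 1 := by
    have := Nat.sub_dvd_pow_sub_pow D.q 1 (max D.k D.t)
    rwa [one_pow] at this
  have hN := D.N_eq
  have hNp := D.Np_le
  set u := D.Np with hu
  have hNN : D.N * 1 ≤ D.N * D.N := Nat.mul_le_mul_left _ hNpos
  have hs : D.F + D.Q ≤ D.N + u := by
    rcases D.FQ_cases with ⟨h1, h2⟩ | ⟨h1, h2⟩ <;> omega
  refine ⟨ν, D.N * D.N + 2 * D.N * ν - D.N, _, by omega, rfl, by omega, ?_⟩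
  rw [add_assoc _ D.F D.Q]
  have hpow : ∀ c, 4 * max D.k D.t + c ≤ n → D.q ^ c * (D.N * D.N * D.N * D.N) ≤ D.q ^ n := by
    intro c hc
    have : D.q ^ c * (D.N * D.N * D.N * D.N) = D.q ^ (4 * max D.k D.t + c) := by
      rw [Dat.N, pow_add, mul_comm 4, pow_mul]; ring
    rw [this]
    exact Nat.pow_le_pow_right D.q_pos hc
  rcases hn with ⟨h4, hn⟩ | ⟨h3, hn⟩ | ⟨h2, hn⟩
  · have hp := hpow 1 hn
    have hu4 : 4 * u ≤ D.N := by rw [hN]; exact Nat.mul_le_mul_right _ h4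
    have hν3 : 3 * ν ≤ D.N - 1 := by rw [hν]; exact Nat.mul_le_mul_right _ (by omega)
    have hp4 : 4 * (D.N * D.N * D.N * D.N) ≤ D.q ^ n := by
      refine le_trans (Nat.mul_le_mul_right _ ?_) hp
      rwa [pow_one]
    have hβ3 : 3 * (D.N * D.N + 2 * D.N * ν - D.N) ≤ 5 * (D.N * D.N) := by
      have : D.N * (3 * ν) ≤ D.N * D.N := Nat.mul_le_mul_left _ (by omega)
      have e : D.N * (3 * ν) = 3 * (D.N * ν) := by ring
      rw [mul_assoc 2]
      omega
    have hN16 : 4 ≤ u := by omega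
    generalize hβ : D.N * D.N + 2 * D.N * ν - D.N = β at hβ3 ⊢
    generalize D.N = N at *
    generalize D.F + D.Q = s at *
    generalize D.q ^ n = Qn at *
    have hb : 3 * (β * (N+2)) ≤ 5 * (N * N) * (N+2) := by
      rw [← mul_assoc]; exact Nat.mul_le_mul_right _ hβ3
    have hs4 : 4 * s ≤ 5 * N := by omega
    have hN3 : 16 * (N * N) ≤ N * N * N := by
      rw [mul_comm]; exact Nat.mul_le_mul_left _ (by omega)
    have hN2 : 16 * N ≤ N * N := Nat.mul_le_mul_right _ (by omega)
    have hN4 : 0 < N * N * N * N := by positivity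
    have x1 : 12 * (β * (N+2) + 2 * s + β + s) ≤ 26 * (N * N * N) := by
      have : 5 * (N * N) * (N+2) = 5 * (N * N * N) + 10 * (N * N) := by ring
      omega
    have x2 : 12 * (β * (N+2) + 2 * s + 2 * s) ≤ 24 * (N * N * N) := by
      have : 5 * (N * N) * (N+2) = 5 * (N * N * N) + 10 * (N * N) := by ring
      omega
    constructor
    · have y1 := Nat.mul_le_mul hs4 x1
      have e1 : 4 * s * (12 * (β * (N+2) + 2 * s + β + s)) = 48 * (s * (β * (N+2) + 2 * s + β + s)) := by ring
      have e2 : 5 * N * (26 * (N * N * N)) = 130 * (N * N * N * N) := by ring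
      omega
    · have y1 := Nat.mul_le_mul x2 (show 4 * (u + 1) ≤ 2 * N by omega)
      have e1 : 12 * (β * (N+2) + 2 * s + 2 * s) * (4 * (u + 1)) = 48 * ((β * (N+2) + 2 * s + 2 * s) * (u+1)) := by ring
      have e2 : 24 * (N * N * N) * (2 * N) = 48 * (N * N * N * N) := by ring
      have y2 := Nat.mul_le_mul_right (2 * N) hβ3
      have e3 : 3 * β * (2 * N) = 3 * (β * (2 * N)) := by ring
      have e4 : 5 * (N * N) * (2 * N) = 10 * (N * N * N) := by ring
      have e5 : 16 * (N * N * N) ≤ N * N * N * N := by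
        rw [mul_comm]; exact Nat.mul_le_mul_left _ (by omega)
      omega
  · have hp := hpow 2 hn
    rw [h3] at hp hN hν hNp
    refine num_core D.N u _ _ (18 * (u * u)) _ _ (4 * u) ?_ (by omega) rfl ?_ ?_
    · have : D.N * (2 * ν) = D.N * (D.N - 1) := by rw [hν]
      rw [Nat.mul_sub, mul_one] at this
      have e : D.N * (2 * ν) = 2 * (D.N * ν) := by ring
      have e2 : D.N * D.N = 9 * (u * u) := by rw [hN]; ring
      rw [mul_assoc 2]
      omega
    · rw [h3]
      refine lt_of_lt_of_le ?_ hp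
      rw [hN]
      nlinarith [mul_le_mul hNp hNp (by omega) (by omega), mul_pos (mul_pos (show 0 < u by omega) (show 0 < u by omega)) (show 0 < u by omega),
        Nat.mul_le_mul_left (u*u*u) hNp, Nat.mul_le_mul_left (u*u) hNp]
    · rw [h3]
      refine lt_of_lt_of_le ?_ hp
      rw [hN]
      nlinarith [mul_le_mul hNp hNp (by omega) (by omega), mul_pos (mul_pos (show 0 < u by omega) (show 0 < u by omega)) (show 0 < u by omega),
        Nat.mul_le_mul_left (u*u*u) hNp, Nat.mul_le_mul_left (u*u) hNp]
  · have hp := hpow 4 hn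
    rw [h2] at hp hN hν hNp
    refine num_core D.N u _ _ (12 * (u * u)) _ _ (3 * u) ?_ (by omega) rfl ?_ ?_
    · have : D.N * (1 * ν) = D.N * (D.N - 1) := by rw [hν]
      rw [Nat.mul_sub, mul_one] at this
      have e : D.N * (1 * ν) = (D.N * ν) := by ring
      have e2 : D.N * D.N = 4 * (u * u) := by rw [hN]; ring
      rw [mul_assoc 2]
      omega
    · rw [h2]
      refine lt_of_lt_of_le ?_ hp
      rw [hN]
      nlinarith [mul_le_mul hNp hNp (by omega) (by omega), mul_pos (mul_pos (show 0 < u by omega) (show 0 < u by omega)) (show 0 < u by omega),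
        Nat.mul_le_mul_left (u*u*u) hNp, Nat.mul_le_mul_left (u*u) hNp]
    · rw [h2]
      refine lt_of_lt_of_le ?_ hp
      rw [hN]
      nlinarith [mul_le_mul hNp hNp (by omega) (by omega), mul_pos (mul_pos (show 0 < u by omega) (show 0 < u by omega)) (show 0 < u by omega),
        Nat.mul_le_mul_left (u*u*u) hNp, Nat.mul_le_mul_left (u*u) hNp]
end FatP
end

section
set_option linter.unusedSectionVars false
open Finset PowerSeries
namespace FatP
variable {K : Type} [Field K]

theorem exists_char (p : ℕ) (hp : p.Prime) [CharP K p] [Fintype K] :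
    ∃ ψ : AddChar K ℂ, ψ.IsPrimitive ∧ ∀ z i, ψ (z ^ p ^ i) = ψ z := by
  obtain rfl := (CharP.eq K (inferInstance : CharP K p) (ringChar.charP K))
  have : Fact (ringChar K).Prime := ⟨hp⟩
  let : Algebra (ZMod (ringChar K)) K := ZMod.algebra _ _
  let ψ : AddChar K ℂ := (ZMod.stdAddChar (N := ringChar K)).compAddMonoidHom
    (Algebra.trace (ZMod (ringChar K)) K).toAddMonoidHom
  refine ⟨ψ, ?_, ?_⟩
  · apply AddChar.IsPrimitive.of_ne_one
    obtain ⟨a, ha⟩ := FiniteField.trace_to_zmod_nondegenerate K one_ne_zero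
    rw [one_mul] at ha
    refine AddChar.ne_one_iff.2 ⟨a, fun hf => ha ?_⟩
    apply ZMod.injective_stdAddChar
    rw [AddChar.map_zero_eq_one]
    exact hf
  · have h1 : ∀ z, ψ (z ^ ringChar K) = ψ z := by
      intro z
      change ZMod.stdAddChar (Algebra.trace (ZMod (ringChar K)) K (z ^ ringChar K)) =
        ZMod.stdAddChar (Algebra.trace (ZMod (ringChar K)) K z)
      congr 1
      have := Algebra.trace_eq_of_equiv_equiv (RingEquiv.refl (ZMod (ringChar K)))
        (frobeniusEquiv K (ringChar K)) (Subsingleton.elim _ _) z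
      simpa [frobenius_def] using this.symm
    intro z i
    induction i with
    | zero => simp
    | succ i ih => rw [pow_succ, pow_mul, h1, ih]

theorem map_sum_prod (ψ : AddChar K ℂ) (s : Finset ℕ) (g : ℕ → K) :
    ψ (∑ i ∈ s, g i) = ∏ i ∈ s, ψ (g i) := by
  classical
  induction s using Finset.induction_on with
  | empty => simp
  | insert i s hi ih => rw [sum_insert hi, prod_insert hi, AddChar.map_add_eq_mul, ih]

theorem dual (p : ℕ) (hp : p.Prime) [CharP K p] [Fintype K] (e : ℕ) (a : ℕ → K) (m : K) (k : ℕ) :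
    Nat.card {x : K // ∑ j ∈ range (k+1), a j * x ^ (p^e) ^ j = m * x} =
    Nat.card {y : K // ∑ j ∈ range (k+1), a (k - j) ^ (p^e) ^ j * y ^ (p^e) ^ j =
      m ^ (p^e)^k * y ^ (p^e)^k} := by
  classical
  have : Fact p.Prime := ⟨hp⟩
  obtain ⟨ψ, hψ, hinv⟩ := exists_char (K := K) p hp
  have hinv' : ∀ z i, ψ (z ^ (p^e)^i) = ψ z := fun z i => by rw [← pow_mul]; exact hinv _ _
  have hsum : ∀ b : K, ∑ x : K, ψ (x * b) = if b = 0 then (Fintype.card K : ℂ) else 0 := by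
    intro b
    rw [AddChar.sum_mulShift b hψ]
    split_ifs <;> simp
  have key : ∀ x y : K, ψ (y * (∑ j ∈ range (k+1), a j * x ^ (p^e) ^ j - m * x)) =
      ψ (x ^ (p^e)^k * (∑ j ∈ range (k+1), a (k - j) ^ (p^e) ^ j * y ^ (p^e) ^ j -
      m ^ (p^e)^k * y ^ (p^e)^k)) := by
    intro x y
    rw [mul_sub, mul_sub, AddChar.map_sub_eq_div, AddChar.map_sub_eq_div]
    congr 1
    · rw [mul_sum, mul_sum, map_sum_prod, map_sum_prod,
        ← Finset.prod_range_reflect]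
      refine prod_congr rfl fun j hj => ?_
      rw [mem_range] at hj
      rw [← hinv' _ j]
      congr 1
      have e1 : k + 1 - 1 - j = k - j := by omega
      rw [e1, mul_pow, mul_pow, ← pow_mul x, ← pow_add, Nat.sub_add_cancel (by omega)]
      ring
    · rw [← hinv' (y * (m * x)) k, mul_pow, mul_pow]
      congr 1
      ring
  have hbij : Function.Bijective (fun x : K => x ^ (p^e)^k) := by
    rw [← Finite.injective_iff_bijective]
    intro x y h
    rw [← pow_mul] at *
    have : iterateFrobenius K p (e * k) x = iterateFrobenius K p (e * k) y := by
      simpa [iterateFrobenius_def, pow_mul] using h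
    exact (iterateFrobenius K p (e*k)).injective this
  have h1 : ∑ x : K, ∑ y : K, ψ (y * (∑ j ∈ range (k+1), a j * x ^ (p^e) ^ j - m * x)) =
      ∑ y : K, ∑ z : K, ψ (z * (∑ j ∈ range (k+1), a (k - j) ^ (p^e) ^ j * y ^ (p^e) ^ j -
      m ^ (p^e)^k * y ^ (p^e)^k)) := by
    rw [sum_comm]
    refine sum_congr rfl fun y _ => ?_
    simp only [key]
    exact hbij.sum_comp (fun z => ψ (z * (∑ j ∈ range (k+1), a (k - j) ^ (p^e) ^ j * y ^ (p^e) ^ j -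
      m ^ (p^e)^k * y ^ (p^e)^k)))
  simp only [hsum, sub_eq_zero, ← sum_filter, sum_const, nsmul_eq_mul] at h1
  have hc : (Fintype.card K : ℂ) ≠ 0 := by exact_mod_cast Fintype.card_ne_zero
  have h2 := mul_right_cancel₀ hc h1
  rw [Nat.card_eq_fintype_card, Nat.card_eq_fintype_card, Fintype.card_subtype,
    Fintype.card_subtype]
  exact_mod_cast h2

theorem fix_le [Fintype K] [DecidableEq K] (q : ℕ) (hq : 2 ≤ q) :
    (univ.filter fun c : K => c ^ q = c).card ≤ q := by
  have h0 := FiniteField.X_pow_card_sub_X_ne_zero K (p := q) (by omega)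
  have hd := FiniteField.X_pow_card_sub_X_natDegree_eq K (p := q) (by omega)
  refine le_trans (Polynomial.card_le_degree_of_subset_roots (p := (Polynomial.X ^ q - Polynomial.X : Polynomial K)) ?_) hd.le
  intro c hc
  rw [mem_val, mem_filter] at hc
  rw [Polynomial.mem_roots h0]
  simp [Polynomial.IsRoot, hc.2]

theorem fix_ge [Fintype K] [DecidableEq K] (q n : ℕ) (hq : 2 ≤ q) (hcard : Fintype.card K = q ^ n) :
    q ≤ (univ.filter fun c : K => c ^ q = c).card := by
  obtain ⟨g, hg⟩ := IsCyclic.exists_ofOrder_eq_natCard (α := Kˣ)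
  rw [Nat.card_eq_fintype_card, Fintype.card_units, hcard] at hg
  obtain ⟨s, hs⟩ : q - 1 ∣ q ^ n - 1 := by
    have := Nat.sub_dvd_pow_sub_pow q 1 n
    rwa [one_pow] at this
  have hpos : 0 < q ^ n - 1 := by
    have : 1 < Fintype.card K := Fintype.one_lt_card
    omega
  have hs0 : s ≠ 0 := by rintro rfl; omega
  have ho : orderOf (g ^ s) = q - 1 := by
    rw [orderOf_pow_of_dvd hs0 (by rw [hg, hs]; exact Dvd.intro_left _ rfl), hg, hs,
      Nat.mul_div_cancel _ (by omega)]
  have hz : (g ^ s) ^ (q-1) = 1 := by rw [← ho]; exact pow_orderOf_eq_one _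
  set ζ : Kˣ := g ^ s
  have h1 : (insert (0 : K) ((range (q-1)).image fun i => ((ζ ^ i : Kˣ) : K))).card = q := by
    rw [card_insert_of_notMem, card_image_of_injOn, card_range]
    · omega
    · intro i hi j hj h
      have h' : ζ ^ i = ζ ^ j := Units.ext h
      refine pow_injOn_Iio_orderOf (x := ζ) ?_ ?_ h'
      · rw [Set.mem_Iio, ho]; simpa using hi
      · rw [Set.mem_Iio, ho]; simpa using hj
    · intro h
      obtain ⟨i, _, hi⟩ := mem_image.1 h
      exact Units.ne_zero _ hi
  rw [← h1]
  refine card_le_card ?_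
  intro c hc
  rw [mem_filter]
  refine ⟨mem_univ _, ?_⟩
  rcases mem_insert.1 hc with rfl | hc
  · rw [h1]; exact zero_pow (by omega)
  · obtain ⟨i, _, rfl⟩ := mem_image.1 hc
    rw [h1, ← Units.val_pow_eq_pow_val]
    congr 1
    obtain ⟨r, rfl⟩ : ∃ r, q = r + 1 := ⟨q - 1, by omega⟩
    rw [Nat.add_sub_cancel] at hz
    rw [pow_succ, ← pow_mul, mul_comm i, pow_mul ζ r, hz, one_pow, one_mul]

theorem kernel_form (D : Dat K) [Fintype K] (n : ℕ) (hcard : Fintype.card K = D.q ^ n)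
    (hn : (4 ≤ D.q ∧ 4 * max D.k D.t + 1 ≤ n) ∨ (D.q = 3 ∧ 4 * max D.k D.t + 2 ≤ n) ∨
      (D.q = 2 ∧ 4 * max D.k D.t + 4 ≤ n)) (m0 : K)
    (h0 : D.q ^ 2 ≤ Nat.card {x : K // D.lin x = m0 * x ^ D.Q})
    (h1 : ∀ m, m ≠ m0 → Nat.card {x : K // D.lin x = m * x ^ D.Q} < D.q ^ 2) : False := by
  classical
  obtain ⟨ν, β, S, e1, e2, e3, e4, e5⟩ := numerics D n hn
  have hq := D.q_two
  simp only [Nat.card_eq_fintype_card, Fintype.card_subtype] at h0 h1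
  have hqq : D.q < D.q ^ 2 := by nlinarith
  obtain ⟨x0, hx0k, hx0⟩ : ∃ x : K, D.lin x = m0 * x ^ D.Q ∧ x ≠ 0 := by
    by_contra hcon
    push Not at hcon
    have : (univ.filter fun x : K => D.lin x = m0 * x ^ D.Q) ⊆ {0} := by
      intro x hx
      rw [mem_filter] at hx
      rw [mem_singleton]; exact hcon x hx.2
    have := card_le_card this
    rw [card_singleton] at this
    omega
  obtain ⟨y0, hy0k, hind⟩ : ∃ y : K, D.lin y = m0 * y ^ D.Q ∧ ∀ c, c ^ D.q = c → y ≠ c * x0 := by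
    by_contra hcon
    push Not at hcon
    have : (univ.filter fun x : K => D.lin x = m0 * x ^ D.Q) ⊆
        (univ.filter fun c : K => c ^ D.q = c).image (· * x0) := by
      intro x hx
      rw [mem_filter] at hx
      obtain ⟨c, hc, h⟩ := hcon x hx.2
      exact mem_image.2 ⟨c, by simpa using hc, h.symm⟩
    have := (card_le_card this).trans card_image_le
    have := fix_le (K := K) D.q hq
    omega
  refine main_lemma D n hcard (by omega) ν β S e1 e2 e3 (hcard ▸ e4) (hcard ▸ e5) m0 x0 y0 hx0 hx0k
    hy0k hind ?_
  intro x1 y1 hx1 hTh hne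
  by_contra hcon
  push Not at hcon
  have hxQ : x1 ^ D.Q ≠ 0 := pow_ne_zero _ hx1
  set m := D.lin x1 / x1 ^ D.Q with hm
  have hxm : D.lin x1 = m * x1 ^ D.Q := by rw [hm, div_mul_cancel₀ _ hxQ]
  have hym : D.lin y1 = m * y1 ^ D.Q := by
    rw [hm, div_mul_eq_mul_div, eq_div_iff hxQ]
    exact (sub_eq_zero.1 hTh).symm
  have hmne : m ≠ m0 := by
    intro h
    rw [h] at hxm; exact hne hxm
  have hlt := h1 m hmne
  set Fq := univ.filter fun c : K => c ^ D.q = c with hFq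
  have hsubfix : ∀ c d : K, c ^ D.q = c → d ^ D.q = d → (c - d) ^ D.q = c - d := by
    intro c d hc hd
    have := D.sub_pow_q 1 c d
    rw [pow_one] at this
    rw [this, hc, hd]
  have hinj : Set.InjOn (fun z : K × K => z.1 * x1 + z.2 * y1) (Fq ×ˢ Fq : Finset (K × K)) := by
    rintro ⟨c, d⟩ h ⟨c', d'⟩ h' heq
    simp only [coe_product, Set.mem_prod, hFq, coe_filter, mem_univ, true_and, Set.mem_ofPred_eq] at h h' heq
    have hdd : d = d' := by
      by_contra hd
      have hd' : d - d' ≠ 0 := sub_ne_zero.2 hd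
      refine hcon ((c' - c) / (d - d')) ?_ ?_
      · rw [div_pow, hsubfix _ _ h'.1 h.1, hsubfix _ _ h.2 h'.2]
      · field_simp
        linear_combination heq
    subst hdd
    have : (c - c') * x1 = 0 := by linear_combination heq
    rcases mul_eq_zero.1 this with h | h
    · rw [sub_eq_zero.1 h]
    · exact absurd h hx1
  have hsub : (Fq ×ˢ Fq).image (fun z : K × K => z.1 * x1 + z.2 * y1) ⊆
      univ.filter fun x : K => D.lin x = m * x ^ D.Q := by
    intro z hz
    obtain ⟨⟨c, d⟩, hcd, rfl⟩ := mem_image.1 hz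
    simp only [mem_product, hFq, mem_filter, mem_univ, true_and] at hcd
    rw [mem_filter]
    refine ⟨mem_univ _, ?_⟩
    dsimp only
    rw [D.lin_add, D.lin_smul hcd.1, D.lin_smul hcd.2, hxm, hym, Dat.Q, D.add_pow_q, mul_pow, mul_pow,
      D.pow_q_of_fix hcd.1, D.pow_q_of_fix hcd.2]
    ring
  have hc := card_le_card hsub
  rw [card_image_of_injOn hinj, card_product] at hc
  have := fix_ge (K := K) D.q n hq hcard
  rw [← hFq] at this
  have := Nat.mul_le_mul this this
  rw [pow_two] at hlt
  omega

end FatP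
end

/-- an `r`-fat polynomial of index `t` with maximum weight `W ≥ 2` whose
`q`-degree `k` and index `t` are small with respect to `n` satisfies `r > 1`
(Corollary `cor:rcurve`, second part).  Same encoding as in the other statements:
`K = F_{q^n}`, the weight of `m` is `dim_{F_q} ker (f - m·x^{q^t})`, encoded as
`Nat.log q` of the kernel cardinality. -/
theorem stmt_3 (p e q n k t W r : ℕ) (hp : p.Prime) (he : 1 ≤ e) (hq : q = p ^ e)
    (htn : t < n) (hkn : k < n)
    (K : Type) [Field K] [Fintype K] (hcard : Fintype.card K = q ^ n)
    (a : ℕ → K) (hmonic : a k = 1) (hat : a t = 0)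
    (hnotmono : ∃ j, j < k ∧ a j ≠ 0)
    (hstruct :
      (t = 0 ∧ a 0 = 0) ∨
      (1 ≤ t ∧ a 0 ≠ 0 ∧
        ((t = 1 ∧ 3 ≤ k) ∨
         (2 ≤ t ∧ (t ∣ k → 3 * t ≤ k) ∧ (¬ t ∣ k → 2 * t - 1 ≤ k) ∧
           (((∀ j, 2 ≤ j → j ≤ t → a j = 0) ∧ t + 2 ≤ k) ∨
            (∀ j, 1 ≤ j → j ≤ t → a j = 0))))))
    (f : K → K) (hf : f = fun x => ∑ j ∈ Finset.range (k + 1), a j * x ^ q ^ j)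
    (hr : r = Nat.card {m : K // 1 < Nat.log q (Nat.card {x : K // f x = m * x ^ q ^ t})})
    (hW2 : 2 ≤ W)
    (hWub : ∀ m : K, Nat.log q (Nat.card {x : K // f x = m * x ^ q ^ t}) ≤ W)
    (hWatt : ∃ m : K, Nat.log q (Nat.card {x : K // f x = m * x ^ q ^ t}) = W)
    (hnum :
      (4 ≤ q ∧ ((max k t : ℕ) : ℝ) < (n : ℝ) / 4) ∨
      (q = 3 ∧ ((max k t : ℕ) : ℝ) ≤ ((n : ℝ) - 2) / 4) ∨
      (q = 2 ∧ ((max k t : ℕ) : ℝ) ≤ (n : ℝ) / 4 - 1)) :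
    1 < r := by
  by_contra hr1
  have hq2 : 2 ≤ q := by
    rw [hq]
    calc 2 ≤ p := hp.two_le
      _ = p ^ 1 := (pow_one _).symm
      _ ≤ _ := Nat.pow_le_pow_right hp.pos he
  obtain ⟨m0, hm0⟩ := hWatt
  have hchp : CharP K p := by
    have : Fact p.Prime := ⟨hp⟩
    exact charP_of_card_eq_prime_pow (f := e * n) (by rw [hcard, hq, pow_mul])
  have h0 : q ^ 2 ≤ Nat.card {x : K // f x = m0 * x ^ q ^ t} := by
    refine Nat.pow_le_of_le_log ?_ (by omega)
    intro h
    rw [h, Nat.log_zero_right] at hm0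
    omega
  have h1 : ∀ m, m ≠ m0 → Nat.card {x : K // f x = m * x ^ q ^ t} < q ^ 2 := by
    intro m hm
    by_contra hcon
    push Not at hcon
    apply hr1
    rw [hr]
    have hlog : 1 < Nat.log q (Nat.card {x : K // f x = m * x ^ q ^ t}) :=
      Nat.le_log_of_pow_le (by omega) hcon
    have hlog0 : 1 < Nat.log q (Nat.card {x : K // f x = m0 * x ^ q ^ t}) := by omega
    rw [Finite.one_lt_card_iff_nontrivial]
    exact ⟨⟨m, hlog⟩, ⟨m0, hlog0⟩, fun h => hm (congrArg Subtype.val h)⟩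
  have hn : (4 ≤ q ∧ 4 * max k t + 1 ≤ n) ∨ (q = 3 ∧ 4 * max k t + 2 ≤ n) ∨
      (q = 2 ∧ 4 * max k t + 4 ≤ n) := by
    rcases hnum with ⟨h, h'⟩ | ⟨h, h'⟩ | ⟨h, h'⟩
    · refine Or.inl ⟨h, ?_⟩
      have : ((4 * max k t : ℕ) : ℝ) < (n : ℝ) := by
        rw [Nat.cast_mul]; push_cast at h' ⊢; linarith
      have := Nat.cast_lt.1 this
      omega
    · refine Or.inr (Or.inl ⟨h, ?_⟩)
      have : ((4 * max k t + 2 : ℕ) : ℝ) ≤ (n : ℝ) := by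
        push_cast at h' ⊢; linarith
      exact Nat.cast_le.1 this
    · refine Or.inr (Or.inr ⟨h, ?_⟩)
      have : ((4 * max k t + 4 : ℕ) : ℝ) ≤ (n : ℝ) := by
        push_cast at h' ⊢; linarith
      exact Nat.cast_le.1 this
  clear hnum
  have hkt : k ≠ t := by
    rintro rfl
    rw [hmonic] at hat
    exact one_ne_zero hat
  obtain ⟨j1, hj1k, hj1⟩ := hnotmono
  rcases hstruct with ⟨ht0, ha0⟩ | ⟨ht, ha0, hs⟩
  · subst ht0
    rw [Nat.max_zero] at hn
    classical
    have hex : ∃ j, a j ≠ 0 := ⟨j1, hj1⟩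
    obtain ⟨j0, hj0, hmin⟩ : ∃ j, a j ≠ 0 ∧ ∀ i, i < j → a i = 0 :=
      ⟨Nat.find hex, Nat.find_spec hex, fun i hi => by
        have := Nat.find_min hex hi
        simpa using this⟩
    have hj0pos : 1 ≤ j0 := by
      rcases Nat.eq_zero_or_pos j0 with h | h
      · rw [h] at hj0; exact absurd ha0 hj0
      · exact h
    have hj0k : j0 < k := by
      by_contra h
      exact hj1 (hmin j1 (by omega))
    have : Fact p.Prime := ⟨hp⟩
    let D : FatP.Dat K :=
      { p := p, e := e, q := q, k := k - j0, t := k, hp := hp, he := he, hq := hq, chp := hchp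
        a := fun i => a (k - i) ^ q ^ i
        ha0 := by
          simp only [Nat.sub_zero, hmonic, one_pow]
          exact one_ne_zero
        hak := by
          have : k - (k - j0) = j0 := by omega
          simp only [this]
          exact pow_ne_zero _ hj0
        hk := by omega
        ht := by omega
        hkt := by omega
        hmax := by omega }
    have hlin : ∀ y : K, D.lin y = ∑ j ∈ Finset.range (k+1), a (k - j) ^ q ^ j * y ^ q ^ j := by
      intro y
      have hsub : Finset.range (k - j0 + 1) ⊆ Finset.range (k+1) := by
        intro i hi
        rw [Finset.mem_range] at *
        omega
      change ∑ j ∈ Finset.range (k - j0 + 1), a (k - j) ^ q ^ j * y ^ q ^ j = _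
      refine Finset.sum_subset hsub ?_
      intro i hi hi'
      rw [Finset.mem_range] at hi hi'
      rw [hmin (k - i) (by omega), zero_pow (pow_ne_zero _ (by omega)), zero_mul]
    have hdual : ∀ m : K, Nat.card {x : K // f x = m * x ^ q ^ 0} =
        Nat.card {y : K // D.lin y = m ^ q ^ k * y ^ D.Q} := by
      intro m
      have h := FatP.dual p hp e a m k
      rw [← hq] at h
      simp only [hlin]
      rw [hf]
      simp only [pow_zero, pow_one]
      exact h
    have hmax : max D.k D.t = k := by
      change max (k - j0) k = k
      omega
    have hbij : Function.Bijective (fun x : K => x ^ q^k) := by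
      rw [← Finite.injective_iff_bijective]
      intro x y h
      have : iterateFrobenius K p (e * k) x = iterateFrobenius K p (e * k) y := by
        simpa [iterateFrobenius_def, pow_mul, hq] using h
      exact (iterateFrobenius K p (e*k)).injective this
    refine FatP.kernel_form D n hcard (by rw [hmax]; exact hn) (m0 ^ q ^ k) ?_ ?_
    · rw [← hdual]; exact h0
    · intro m hm
      obtain ⟨m', rfl⟩ := hbij.2 m
      dsimp only at hm ⊢
      rw [← hdual]
      exact h1 m' (fun h => hm (by rw [h]))
  · let D : FatP.Dat K :=
      { p := p, e := e, q := q, k := k, t := t, hp := hp, he := he, hq := hq, chp := hchp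
        a := a
        ha0 := ha0
        hak := by rw [hmonic]; exact one_ne_zero
        hk := by omega
        ht := ht
        hkt := hkt
        hmax := by
          rcases hs with h | h
          · exact le_trans (by omega) (le_max_left k t)
          · exact le_trans h.1 (le_max_right k t) }
    subst hf
    exact FatP.kernel_form D n hcard hn m0 h0 h1
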